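/- arXiv:math/0512420 — 2 statements merged into one kernel-verified Lean document; each statement's English description precedes it below -/
import Mathlib

section
/- Let G be a graph with three vertices u, v₁, v₂ such that {v₁,v₂} ∉ E(G), N(u) = {v₁,v₂}, and both G[N(v₁) \ {u}] and G[N(v₂) \ {u}] are complete graphs. If Ind(G \ (Ṅ(u) ∪ (N(v₁) ∩ N(v₂)))) is (n−1)-connected, and Ind(G \ (Ṅ(w₁) ∪ Ṅ(w₂) ∪ {u})) is (n−2)-connected for every edge {w₁,w₂} of the complement of G[N(v₁) ∪ N(v₂) \ {u}], then Ind(G) is n-connected. -/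
open SimpleGraph

/-- A claw in `G` on center `u` and leaves `v₁, v₂, v₃`. -/
def SimpleGraph.IsClaw {V : Type*} (G : SimpleGraph V) (u v₁ v₂ v₃ : V) : Prop :=
  v₁ ≠ v₂ ∧ v₁ ≠ v₃ ∧ v₂ ≠ v₃ ∧
  G.Adj u v₁ ∧ G.Adj u v₂ ∧ G.Adj u v₃ ∧
  ¬G.Adj v₁ v₂ ∧ ¬G.Adj v₁ v₃ ∧ ¬G.Adj v₂ v₃

/-- A graph is claw-free if it has no induced claw. -/
def SimpleGraph.ClawFree {V : Type*} (G : SimpleGraph V) : Prop :=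
  ∀ u v₁ v₂ v₃ : V, ¬ G.IsClaw u v₁ v₂ v₃

/-- The closed neighborhood `Ṅ(v) = N(v) ∪ {v}`. -/
def SimpleGraph.closedNbhd {V : Type*} (G : SimpleGraph V) (v : V) : Set V :=
  insert v (G.neighborSet v)

/-- The set of faces of the independence complex `Ind(G)`. -/
def indepFaces {V : Type*} (G : SimpleGraph V) : Set (Finset V) :=
  {s | ∀ a ∈ s, ∀ b ∈ s, ¬ G.Adj a b}

/-- The geometric realization of an abstract simplicial complex with vertex set `V`. -/
def realization {V : Type*} (K : Set (Finset V)) : Type _ :=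
  {f : V → ℝ // (∀ v, 0 ≤ f v) ∧ (∑ᶠ v, f v) = 1 ∧ ∃ s ∈ K, {v | f v ≠ 0} = ↑s}

instance {V : Type*} (K : Set (Finset V)) : TopologicalSpace (realization K) :=
  instTopologicalSpaceSubtype

/-- A space is `n`-connected (`n : ℤ`) if it is nonempty when `n ≥ -1` and every continuous
map from the `i`-sphere extends to the `(i+1)`-ball for all `0 ≤ i ≤ n`. -/
def IsNConnected (n : ℤ) (X : Type*) [TopologicalSpace X] : Prop :=
  (-1 ≤ n → Nonempty X) ∧
  ∀ i : ℕ, (i : ℤ) ≤ n →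
    ∀ f : C(Metric.sphere (0 : EuclideanSpace ℝ (Fin (i + 1))) 1, X),
      ∃ g : C(Metric.closedBall (0 : EuclideanSpace ℝ (Fin (i + 1))) 1, X),
        ∀ x : Metric.sphere (0 : EuclideanSpace ℝ (Fin (i + 1))) 1,
          g ⟨x.1, Metric.sphere_subset_closedBall x.2⟩ = f x

/-- Relation generating the unreduced suspension: glue `X × {0}` to a south pole and
`X × {1}` to a north pole. -/
def SuspRel (X : Type*) : X × unitInterval ⊕ Bool → X × unitInterval ⊕ Bool → Prop :=
  fun a b => (∃ x, a = Sum.inl (x, 0) ∧ b = Sum.inr false) ∨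
    (∃ x, a = Sum.inl (x, 1) ∧ b = Sum.inr true)

/-- The unreduced suspension of a space. -/
def Susp (X : Type*) [TopologicalSpace X] : Type _ := Quot (SuspRel X)

instance (X : Type*) [TopologicalSpace X] : TopologicalSpace (Susp X) :=
  instTopologicalSpaceQuot

/-- The north pole of a suspension. -/
def Susp.north (X : Type*) [TopologicalSpace X] : Susp X := Quot.mk _ (Sum.inr true)

/-- Relation generating the wedge sum of a family of pointed spaces. -/
def WedgeRel {ι : Type*} (X : ι → Type*) (pt : ∀ i, X i) :
    (Σ i, X i) ⊕ Unit → (Σ i, X i) ⊕ Unit → Prop :=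
  fun a b => ∃ i, a = Sum.inl ⟨i, pt i⟩ ∧ b = Sum.inr ()

/-- The wedge sum of a family of pointed spaces. -/
def Wedge {ι : Type*} (X : ι → Type*) [∀ i, TopologicalSpace (X i)] (pt : ∀ i, X i) :
    Type _ :=
  Quot (WedgeRel X pt)

instance {ι : Type*} (X : ι → Type*) [∀ i, TopologicalSpace (X i)] (pt : ∀ i, X i) :
    TopologicalSpace (Wedge X pt) :=
  instTopologicalSpaceQuot

/-- The graph `L^k_n`: vertices `{1, …, n}`, with `i < j` adjacent iff `j - i < k`. -/
def lineGraphL (n k : ℕ) : SimpleGraph (Fin n) :=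
  SimpleGraph.fromRel (fun i j => (i : ℕ) < j ∧ (j : ℕ) - i < k)

/-- The graph `C^k_n`: vertices `{1, …, n}`, with `i < j` adjacent iff `j - i < k` or
`(n + i) - j < k`. -/
def circGraphC (n k : ℕ) : SimpleGraph (Fin n) :=
  SimpleGraph.fromRel (fun i j => (i : ℕ) < j ∧ ((j : ℕ) - i < k ∨ (n + i) - j < k))

/-- One elementary collapse step: remove a free face `σ` together with the unique face
`τ` properly containing it (with `τ` of one dimension higher). -/
def ElemCollapse {V : Type*} (K L : Set (Finset V)) : Prop :=
  ∃ σ τ : Finset V, σ ∈ K ∧ τ ∈ K ∧ σ ⊂ τ ∧ τ.card = σ.card + 1 ∧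
    (∀ ρ ∈ K, σ ⊂ ρ → ρ = τ) ∧ L = K \ {σ, τ}

/-- `K` collapses onto `L` if there is a finite sequence of elementary collapses from
`K` to `L`. -/
def Collapses {V : Type*} (K L : Set (Finset V)) : Prop :=
  Relation.ReflTransGen ElemCollapse K L

open Metric Set

/-- Every continuous map from the boundary of the cube `[-1, 1]^ι` to `T` extends to a continuous
map from the cube to `T`. The cube is the unit ball of the sup norm. -/
def HasCubeExtension (ι : Type*) [Fintype ι] {X : Type*} [TopologicalSpace X] (T : Set X) : Prop :=
  ∀ f : (ι → ℝ) → X, ContinuousOn f (sphere 0 1) → MapsTo f (sphere 0 1) T →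
    ∃ g : (ι → ℝ) → X, ContinuousOn g (closedBall 0 1) ∧ MapsTo g (closedBall 0 1) T ∧
      EqOn g f (sphere 0 1)

section Collar

variable {E : Type*} [NormedAddCommGroup E] [NormedSpace ℝ E] {X : Type*} [TopologicalSpace X]

/-- If one end of a homotopy of maps from the sphere to `T` extends to the ball, so does the
other end. -/
lemma exists_ball_extension_of_homotopy {T : Set X} (H : ℝ × E → X) (g₀ : E → X)
    (hH : ContinuousOn H (Icc 0 1 ×ˢ sphere 0 1)) (hHT : MapsTo H (Icc 0 1 ×ˢ sphere 0 1) T)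
    (hg₀ : ContinuousOn g₀ (closedBall 0 1)) (hg₀T : MapsTo g₀ (closedBall 0 1) T)
    (h₀ : ∀ x ∈ sphere (0 : E) 1, H (0, x) = g₀ x) :
    ∃ g : E → X, ContinuousOn g (closedBall 0 1) ∧ MapsTo g (closedBall 0 1) T ∧
      ∀ x ∈ sphere (0 : E) 1, g x = H (1, x) := by
  classical
  set inner : Set E := closedBall 0 (1 / 2)
  set outer : Set E := {x | 1 / 2 ≤ ‖x‖ ∧ ‖x‖ ≤ 1}
  set c : E → ℝ × E := fun x => (2 * ‖x‖ - 1, ‖x‖⁻¹ • x)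
  have hc : ContinuousOn c outer := by
    have : ∀ x ∈ outer, ‖x‖ ≠ 0 := fun x hx => by have := hx.1; intro h; linarith
    fun_prop (disch := assumption)
  have hcm : MapsTo c outer (Icc 0 1 ×ˢ sphere 0 1) := by
    intro x hx
    have h0 : 0 < ‖x‖ := by have := hx.1; linarith
    refine ⟨⟨?_, ?_⟩, ?_⟩
    · have := hx.1; simp only [c]; linarith
    · have := hx.2; simp only [c]; linarith
    · simp [c, norm_smul, h0.ne']
  have hd : MapsTo (fun x : E => (2 : ℝ) • x) inner (closedBall 0 1) := by
    intro x hx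
    simp only [inner, mem_closedBall_zero_iff, norm_smul, Real.norm_ofNat] at hx ⊢
    linarith
  let g : E → X := fun x => if ‖x‖ ≤ 1 / 2 then g₀ ((2 : ℝ) • x) else H (c x)
  have hg_inner : EqOn g (fun x => g₀ ((2 : ℝ) • x)) inner := fun x hx =>
    if_pos (by simpa [inner] using hx)
  have hg_outer : EqOn g (fun x => H (c x)) outer := by
    intro x hx
    by_cases h : ‖x‖ ≤ 1 / 2
    · have h' : ‖x‖ = 1 / 2 := le_antisymm h hx.1
      have : c x = (0, (2 : ℝ) • x) := by simp [c, h']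
      simp only [g, if_pos h, this]
      exact (h₀ _ (by simp [norm_smul, h'])).symm
    · exact if_neg h
  have hcover : closedBall (0 : E) 1 ⊆ inner ∪ outer := by
    intro x hx
    simp only [mem_closedBall_zero_iff] at hx
    rcases le_total ‖x‖ (1 / 2) with h | h
    · exact .inl (by simpa [inner] using h)
    · exact .inr ⟨h, hx⟩
  refine ⟨g, ?_, ?_, ?_⟩
  · refine ContinuousOn.mono (ContinuousOn.union_of_isClosed ?_ ?_ isClosed_closedBall ?_) hcover
    · exact (hg₀.comp (by fun_prop) hd).congr hg_inner
    · exact (hH.comp hc hcm).congr hg_outer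
    · exact (isClosed_le continuous_const continuous_norm).inter
        (isClosed_le continuous_norm continuous_const)
  · intro x hx
    rcases hcover hx with h | h
    · rw [hg_inner h]; exact hg₀T (hd h)
    · rw [hg_outer h]; exact hHT (hcm h)
  · intro x hx
    have hx1 : ‖x‖ = 1 := by simpa using hx
    have ho : x ∈ outer := ⟨by rw [hx1]; norm_num, hx1.le⟩
    rw [hg_outer ho]
    norm_num [c, hx1]

end Collar

/-- Extension of maps from the boundary of the cube passes to a set `T` that is a retract of `T'`
up to a straight-line homotopy. -/
lemma HasCubeExtension.of_segment {ι : Type*} [Fintype ι] {X Y : Type*}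
    [NormedAddCommGroup X] [NormedSpace ℝ X] [TopologicalSpace Y] {T : Set X} {T' : Set Y}
    (hT' : HasCubeExtension ι T') (j : Y → X) (r : X → Y)
    (hj : ContinuousOn j T') (hjT : MapsTo j T' T) (hr : ContinuousOn r T) (hrT : MapsTo r T T')
    (hseg : ∀ x ∈ T, segment ℝ x (j (r x)) ⊆ T) : HasCubeExtension ι T := by
  intro f hf hfT
  obtain ⟨g, hg, hgT, hgf⟩ := hT' (r ∘ f) (hr.comp hf hfT) (hrT.comp hfT)
  have hj' : ContinuousOn (fun x => j (r (f x))) (sphere 0 1) :=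
    hj.comp (hr.comp hf hfT) (hrT.comp hfT)
  obtain ⟨g', hg', hgT', hgf'⟩ := exists_ball_extension_of_homotopy (T := T)
    (fun p : ℝ × (ι → ℝ) => p.1 • f p.2 + (1 - p.1) • j (r (f p.2))) (j ∘ g)
    (by
      have h2 : MapsTo (Prod.snd : ℝ × (ι → ℝ) → _) (Icc (0 : ℝ) 1 ×ˢ sphere 0 1) (sphere 0 1) :=
        fun p hp => hp.2
      have hf2 := hf.comp continuousOn_snd h2
      have hj2 := hj'.comp continuousOn_snd h2
      exact (continuousOn_fst.smul hf2).add ((continuousOn_const.sub continuousOn_fst).smul hj2))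
    (by
      rintro ⟨t, x⟩ ⟨⟨h0, h1⟩, hx⟩
      exact hseg _ (hfT hx) ⟨t, 1 - t, h0, by simpa using h1, by ring, rfl⟩)
    (hj.comp hg hgT) (hjT.comp hgT)
    (by intro x hx; simp [hgf hx])
  exact ⟨g', hg', hgT', fun x hx => by simp [hgf' x hx]⟩

lemma HasCubeExtension.of_starConvex {ι : Type*} [Fintype ι] {X : Type*}
    [NormedAddCommGroup X] [NormedSpace ℝ X] {T : Set X} {p : X} (hp : p ∈ T)
    (hT : StarConvex ℝ p T) : HasCubeExtension ι T := by
  refine HasCubeExtension.of_segment (T' := (univ : Set Unit)) ?_ (fun _ => p) (fun _ => ())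
    continuousOn_const (fun _ _ => hp) continuousOn_const (fun _ _ => trivial) ?_
  · exact fun f _ _ => ⟨fun _ => (), continuousOn_const, fun _ _ => trivial, fun _ _ => rfl⟩
  · intro x hx
    rw [segment_symm]
    exact hT.segment_subset hx

/-- The cell of the integer grid in `ι → ℝ` with lowest corner `c.1` which extends by one unit in
the directions `c.2`. -/
def gridCell {ι : Type*} (c : (ι → ℤ) × Finset ι) : Set (ι → ℝ) :=
  {x | ∀ j, (j ∈ c.2 → (c.1 j : ℝ) ≤ x j ∧ x j ≤ c.1 j + 1) ∧ (j ∉ c.2 → x j = c.1 j)}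

/-- The relative boundary of a cell of the integer grid. -/
def gridCellBoundary {ι : Type*} (c : (ι → ℤ) × Finset ι) : Set (ι → ℝ) :=
  {x ∈ gridCell c | ∃ j ∈ c.2, x j = c.1 j ∨ x j = c.1 j + 1}

section Grid

variable {ι : Type*}

lemma isClosed_gridCell (c : (ι → ℤ) × Finset ι) : IsClosed (gridCell c) := by
  have : gridCell c = ⋂ j, ({x : ι → ℝ | j ∈ c.2 → (c.1 j : ℝ) ≤ x j ∧ x j ≤ c.1 j + 1} ∩
      {x : ι → ℝ | j ∉ c.2 → x j = c.1 j}) := by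
    ext x; simp [gridCell]
  rw [this]
  refine isClosed_iInter fun j => IsClosed.inter ?_ ?_
  · by_cases h : j ∈ c.2
    · simp only [h, true_imp_iff]
      exact (isClosed_le continuous_const (continuous_apply j)).inter
        (isClosed_le (continuous_apply j) continuous_const)
    · simp [h]
  · by_cases h : j ∈ c.2
    · simp [h]
    · simp only [h, not_false_eq_true, true_imp_iff]
      exact isClosed_eq (continuous_apply j) continuous_const

lemma corner_mem_gridCell (c : (ι → ℤ) × Finset ι) : (fun j => (c.1 j : ℝ)) ∈ gridCell c :=
  fun _ => ⟨fun _ => ⟨le_rfl, by simp⟩, fun _ => rfl⟩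

lemma gridCell_dist_le {c : (ι → ℤ) × Finset ι} [Fintype ι] {x y : ι → ℝ}
    (hx : x ∈ gridCell c) (hy : y ∈ gridCell c) : dist x y ≤ 1 := by
  refine (dist_pi_le_iff zero_le_one).2 fun j => ?_
  rw [Real.dist_eq, abs_le]
  by_cases h : j ∈ c.2
  · have h1 := (hx j).1 h
    have h2 := (hy j).1 h
    constructor <;> linarith
  · simp [(hx j).2 h, (hy j).2 h]

lemma gridCell_eq_of_mem {c b : (ι → ℤ) × Finset ι} {x : ι → ℝ} (hc : x ∈ gridCell c)
    (hxc : x ∉ gridCellBoundary c) (hb : x ∈ gridCell b) (hcard : b.2.card ≤ c.2.card) :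
    b = c := by
  have hinter : ∀ j ∈ c.2, (c.1 j : ℝ) < x j ∧ x j < c.1 j + 1 := by
    intro j hj
    have h := (hc j).1 hj
    refine ⟨lt_of_le_of_ne h.1 fun h' => hxc ⟨hc, j, hj, .inl h'.symm⟩,
      lt_of_le_of_ne h.2 fun h' => hxc ⟨hc, j, hj, .inr h'⟩⟩
  have hsub : c.2 ⊆ b.2 := by
    intro j hj
    by_contra hjb
    have h := hinter j hj
    rw [(hb j).2 hjb] at h
    have h1 : c.1 j < b.1 j := by exact_mod_cast h.1
    have h2 : b.1 j < c.1 j + 1 := by exact_mod_cast h.2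
    omega
  have heq : c.2 = b.2 := Finset.eq_of_subset_of_card_le hsub hcard
  refine Prod.ext (funext fun j => ?_) heq.symm
  by_cases hj : j ∈ c.2
  · have h := hinter j hj
    have h' := (hb j).1 (hsub hj)
    have h1 : c.1 j < b.1 j + 1 := by exact_mod_cast h.1.trans_le h'.2
    have h2 : b.1 j < c.1 j + 1 := by exact_mod_cast h'.1.trans_lt h.2
    omega
  · have h1 := (hc j).2 hj
    have h2 := (hb j).2 (heq ▸ hj)
    exact_mod_cast h2.symm.trans h1

lemma exists_face_of_mem_gridCellBoundary {c : (ι → ℤ) × Finset ι} {x : ι → ℝ}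
    (hx : x ∈ gridCellBoundary c) :
    ∃ b : (ι → ℤ) × Finset ι, x ∈ gridCell b ∧ gridCell b ⊆ gridCell c ∧
      gridCell b ⊆ gridCellBoundary c ∧ b.2.card < c.2.card := by
  classical
  obtain ⟨hxc, j, hj, hxj⟩ := hx
  obtain ⟨z, hz, hxz⟩ : ∃ z : ℤ, (z = c.1 j ∨ z = c.1 j + 1) ∧ x j = z := by
    rcases hxj with h | h
    · exact ⟨_, .inl rfl, h⟩
    · exact ⟨_, .inr rfl, by push_cast; exact h⟩
  have hz' : (z : ℝ) = c.1 j ∨ (z : ℝ) = c.1 j + 1 := by exact_mod_cast hz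
  have hsub : gridCell (Function.update c.1 j z, c.2.erase j) ⊆ gridCell c := by
    intro y hy i
    have h := hy i
    by_cases hij : i = j
    · subst hij
      have h2 : y i = z := by simpa using h.2 (by simp)
      refine ⟨fun _ => ?_, fun h' => absurd hj h'⟩
      rw [h2]
      rcases hz' with h | h <;> rw [h] <;> constructor <;> linarith
    · simpa [hij] using h
  refine ⟨(Function.update c.1 j z, c.2.erase j), ?_, hsub, ?_,
    Finset.card_erase_lt_of_mem hj⟩
  · intro i
    by_cases hij : i = j
    · subst hij; simpa using hxz
    · simpa [hij] using hxc i
  · intro y hy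
    have h2 : y j = z := by simpa using (hy j).2 (by simp)
    exact ⟨hsub hy, j, hj, by rw [h2]; exact hz'⟩

/-- A map on the boundary of a grid cell extends to the cell. -/
lemma HasCubeExtension.exists_gridCell_extension {X : Type*} [TopologicalSpace X] {T : Set X}
    {c : (ι → ℤ) × Finset ι} (hT : HasCubeExtension c.2 T) (f : (ι → ℝ) → X)
    (hf : ContinuousOn f (gridCellBoundary c)) (hfT : MapsTo f (gridCellBoundary c) T) :
    ∃ g : (ι → ℝ) → X, ContinuousOn g (gridCell c) ∧ MapsTo g (gridCell c) T ∧
      EqOn g f (gridCellBoundary c) := by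
  classical
  let α : (c.2 → ℝ) → ι → ℝ := fun y j =>
    if h : j ∈ c.2 then c.1 j + (y ⟨j, h⟩ + 1) / 2 else c.1 j
  let β : (ι → ℝ) → c.2 → ℝ := fun x i => 2 * (x i - c.1 i) - 1
  have hα : Continuous α := by
    refine continuous_pi fun j => ?_
    by_cases h : j ∈ c.2
    · simp only [α, h, dif_pos]; fun_prop
    · simp only [α, h, dif_neg, not_false_eq_true]; fun_prop
  have hβ : Continuous β := by fun_prop
  have hαβ : ∀ x ∈ gridCell c, α (β x) = x := by
    intro x hx
    ext j
    by_cases h : j ∈ c.2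
    · simp only [α, β, h, dif_pos]; ring
    · simp [α, h, (hx j).2 h]
  have hβc : MapsTo β (gridCell c) (closedBall 0 1) := by
    intro x hx
    rw [mem_closedBall_zero_iff, pi_norm_le_iff_of_nonneg zero_le_one]
    intro i
    have h := (hx i).1 i.2
    rw [Real.norm_eq_abs, abs_le]
    constructor <;> simp only [β] <;> linarith
  have hβb : MapsTo β (gridCellBoundary c) (sphere 0 1) := by
    rintro x ⟨hx, j, hj, hxj⟩
    have h1 : ‖β x‖ ≤ 1 := by simpa using hβc hx
    have h2 := norm_le_pi_norm (β x) ⟨j, hj⟩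
    have h3 : ‖β x ⟨j, hj⟩‖ = 1 := by
      rcases hxj with h | h <;> norm_num [β, h]
    rw [mem_sphere_zero_iff_norm]
    linarith
  have hαb : MapsTo α (sphere 0 1) (gridCellBoundary c) := by
    intro y hy
    have hy1 : ‖y‖ = 1 := by simpa using hy
    have hle : ∀ i, |y i| ≤ 1 := fun i => by
      rw [← hy1]; exact norm_le_pi_norm y i
    refine ⟨fun j => ⟨fun hj => ?_, fun hj => by simp [α, hj]⟩, ?_⟩
    · have := abs_le.1 (hle ⟨j, hj⟩)
      simp only [α, hj, dif_pos]
      constructor <;> linarith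
    · obtain ⟨i, hi⟩ : ∃ i, |y i| = 1 := by
        by_contra! h
        have : ‖y‖ < 1 := (pi_norm_lt_iff zero_lt_one).2 fun i => lt_of_le_of_ne (hle i) (h i)
        linarith
      refine ⟨i, i.2, ?_⟩
      rcases eq_or_eq_neg_of_abs_eq hi with h | h
      · right; simp [α, h]
      · left; simp [α, h]
  obtain ⟨g, hg, hgT, hgf⟩ := hT (f ∘ α) (hf.comp hα.continuousOn hαb) (hfT.comp hαb)
  refine ⟨g ∘ β, hg.comp hβ.continuousOn hβc, hgT.comp hβc, fun x hx => ?_⟩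
  simp [hgf (hβb hx), hαβ x hx.1]

lemma exists_gridCell_of_mem_closedBall [Fintype ι] {N : ℕ} {x : ι → ℝ}
    (hx : x ∈ closedBall 0 (N : ℝ)) :
    ∃ c : (ι → ℤ) × Finset ι, x ∈ gridCell c ∧ gridCell c ⊆ closedBall 0 (N : ℝ) ∧
      (x ∈ sphere 0 (N : ℝ) → gridCell c ⊆ sphere 0 (N : ℝ)) := by
  classical
  have hx' : ∀ j, |x j| ≤ N := fun j =>
    (norm_le_pi_norm x j).trans (mem_closedBall_zero_iff.1 hx)
  set c : (ι → ℤ) × Finset ι := (fun j => ⌊x j⌋, Finset.univ.filter fun j => x j ≠ ⌊x j⌋) with hc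
  have hball : gridCell c ⊆ closedBall 0 (N : ℝ) := by
    intro y hy
    rw [mem_closedBall_zero_iff, pi_norm_le_iff_of_nonneg (Nat.cast_nonneg N)]
    intro j
    have h := hy j
    have hxj := abs_le.1 (hx' j)
    rw [Real.norm_eq_abs, abs_le]
    by_cases hj : x j = ⌊x j⌋
    · have h2 : y j = ⌊x j⌋ := h.2 (by simpa [hc] using hj)
      rw [h2, ← hj]; exact hxj
    · have h1 : (⌊x j⌋ : ℝ) ≤ y j ∧ y j ≤ ⌊x j⌋ + 1 := h.1 (by simpa [hc] using hj)
      have hlt : x j < N := lt_of_le_of_ne hxj.2 fun h' => hj (by rw [h']; simp)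
      have h3 : ⌊x j⌋ < (N : ℤ) := Int.floor_lt.2 (by exact_mod_cast hlt)
      have h4 : -(N : ℤ) ≤ ⌊x j⌋ := Int.le_floor.2 (by push_cast; exact hxj.1)
      have h3' : (⌊x j⌋ : ℝ) + 1 ≤ N := by exact_mod_cast h3
      have h4' : -(N : ℝ) ≤ ⌊x j⌋ := by exact_mod_cast h4
      constructor <;> linarith
  refine ⟨c, fun j => ⟨fun _ => ⟨Int.floor_le _, (Int.lt_floor_add_one _).le⟩,
    fun hj => by simpa [hc] using hj⟩, hball, fun hxs y hy => ?_⟩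
  rw [mem_sphere_zero_iff_norm] at hxs ⊢
  refine le_antisymm (by simpa using hball hy) ?_
  rcases Nat.eq_zero_or_pos N with rfl | hN
  · simp
  obtain ⟨j, hj⟩ : ∃ j, |x j| = N := by
    by_contra! h
    exact ((pi_norm_lt_iff (by exact_mod_cast hN)).2 fun j => lt_of_le_of_ne (hx' j) (h j)).ne hxs
  have hfl : x j = ⌊x j⌋ := by
    rcases eq_or_eq_neg_of_abs_eq hj with h | h
    · rw [h]; simp
    · rw [h, Int.floor_neg]; simp
  have h2 : y j = x j := by rw [hfl]; exact (hy j).2 (by simpa [hc] using hfl)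
  rw [← hj, ← h2]
  exact norm_le_pi_norm y j

/-- A map with prescribed carriers, given on some cells of a cubical grid, extends to the whole
cube when maps from cell boundaries extend inside the carriers of the remaining cells. -/
theorem exists_extension_of_gridCell_carrier [Fintype ι] {X : Type*} [TopologicalSpace X] (N : ℕ)
    (T : (ι → ℤ) × Finset ι → Set X) (Φ : Set ((ι → ℤ) × Finset ι)) (g₀ : (ι → ℝ) → X)
    (hΦ : ∀ c ∈ Φ, ∀ b, gridCell b ⊆ gridCell c → b ∈ Φ)
    (hT : ∀ c b, gridCell c ⊆ closedBall 0 (N : ℝ) → gridCell b ⊆ gridCell c →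
      b.2.card < c.2.card → T b ⊆ T c)
    (hg₀ : ∀ c ∈ Φ, ContinuousOn g₀ (gridCell c))
    (hg₀T : ∀ c ∈ Φ, MapsTo g₀ (gridCell c) (T c))
    (hext : ∀ c, gridCell c ⊆ closedBall 0 (N : ℝ) → c ∉ Φ → HasCubeExtension c.2 (T c)) :
    ∃ g : (ι → ℝ) → X, ContinuousOn g (closedBall 0 (N : ℝ)) ∧
      (∀ c, gridCell c ⊆ closedBall 0 (N : ℝ) → MapsTo g (gridCell c) (T c)) ∧
      ∀ c ∈ Φ, gridCell c ⊆ closedBall 0 (N : ℝ) → EqOn g g₀ (gridCell c) := by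
  classical
  have key : ∀ s : Finset ((ι → ℤ) × Finset ι), (∀ c ∈ s, gridCell c ⊆ closedBall 0 (N : ℝ)) →
      (∀ c ∈ s, ∀ b, gridCell b ⊆ gridCell c → b.2.card < c.2.card → b ∈ s) →
      ∃ g : (ι → ℝ) → X, ContinuousOn g (⋃ c ∈ s, gridCell c) ∧
        (∀ c ∈ s, MapsTo g (gridCell c) (T c)) ∧ ∀ c ∈ s, c ∈ Φ → EqOn g g₀ (gridCell c) := by
    intro s
    induction s using Finset.induction_on_max_value
      (fun c : (ι → ℤ) × Finset ι => c.2.card) with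
    | empty => exact fun _ _ => ⟨g₀, by simp, by simp, by simp⟩
    | insert a s has hmax ih =>
      intro hball hlow
      obtain ⟨g, hg, hgT, hgΦ⟩ := ih (fun c hc => hball c (Finset.mem_insert_of_mem hc))
        (by
          intro c hc b hbc hcard
          refine Finset.mem_of_mem_insert_of_ne (hlow c (Finset.mem_insert_of_mem hc) b hbc hcard) ?_
          rintro rfl
          exact absurd hcard (not_lt.2 (hmax c hc)))
      have haball := hball a (Finset.mem_insert_self a s)
      have hface : ∀ x ∈ gridCellBoundary a, ∃ b ∈ s, x ∈ gridCell b ∧ gridCell b ⊆ gridCell a ∧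
          gridCell b ⊆ gridCellBoundary a ∧ b.2.card < a.2.card := by
        intro x hx
        obtain ⟨b, hxb, hba, hba', hcard⟩ := exists_face_of_mem_gridCellBoundary hx
        refine ⟨b, Finset.mem_of_mem_insert_of_ne
          (hlow a (Finset.mem_insert_self a s) b hba hcard) ?_, hxb, hba, hba', hcard⟩
        rintro rfl
        exact lt_irrefl _ hcard
      have hover : ∀ x ∈ gridCell a, ∀ c ∈ s, x ∈ gridCell c → x ∈ gridCellBoundary a := by
        intro x hx c hc hxc
        by_contra h
        exact has (gridCell_eq_of_mem hx h hxc (hmax c hc) ▸ hc)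
      obtain ⟨ga, hga, hgaT, hgab, hgaΦ⟩ : ∃ ga : (ι → ℝ) → X, ContinuousOn ga (gridCell a) ∧
          MapsTo ga (gridCell a) (T a) ∧ EqOn ga g (gridCellBoundary a) ∧
          (a ∈ Φ → EqOn ga g₀ (gridCell a)) := by
        by_cases ha : a ∈ Φ
        · refine ⟨g₀, hg₀ a ha, hg₀T a ha, fun x hx => ?_, fun _ _ _ => rfl⟩
          obtain ⟨b, hb, hxb, hba, -, -⟩ := hface x hx
          exact (hgΦ b hb (hΦ a ha b hba) hxb).symm
        · obtain ⟨ga, h1, h2, h3⟩ := (hext a haball ha).exists_gridCell_extension g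
            (hg.mono fun x hx => by
              obtain ⟨b, hb, hxb, -⟩ := hface x hx
              exact mem_biUnion hb hxb)
            (fun x hx => by
              obtain ⟨b, hb, hxb, hba, -, hcard⟩ := hface x hx
              exact hT a b haball hba hcard (hgT b hb hxb))
          exact ⟨ga, h1, h2, h3, fun h => absurd h ha⟩
      let g' : (ι → ℝ) → X := fun x => if x ∈ gridCell a then ga x else g x
      have hg'a : EqOn g' ga (gridCell a) := fun x hx => if_pos hx
      have hg's : ∀ c ∈ s, EqOn g' g (gridCell c) := by
        intro c hc x hx
        by_cases hxa : x ∈ gridCell a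
        · rw [hg'a hxa]
          exact hgab (hover x hxa c hc hx)
        · exact if_neg hxa
      refine ⟨g', ?_, ?_, ?_⟩
      · rw [Finset.set_biUnion_insert]
        refine ContinuousOn.union_of_isClosed (hga.congr hg'a) (hg.congr ?_) (isClosed_gridCell a)
          (isClosed_biUnion_finset fun c _ => isClosed_gridCell c)
        intro x hx
        obtain ⟨c, hc, hxc⟩ := mem_iUnion₂.1 hx
        exact hg's c hc hxc
      · intro c hc
        rcases Finset.mem_insert.1 hc with rfl | hc
        · exact hgaT.congr hg'a.symm
        · exact (hgT c hc).congr (hg's c hc).symm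
      · intro c hc hcΦ
        rcases Finset.mem_insert.1 hc with rfl | hc
        · exact hg'a.trans (hgaΦ hcΦ)
        · exact (hg's c hc).trans (hgΦ c hc hcΦ)
  have hfin : {c : (ι → ℤ) × Finset ι | gridCell c ⊆ closedBall 0 (N : ℝ)}.Finite := by
    refine Set.Finite.subset ((Set.finite_Icc (fun _ : ι => -(N : ℤ)) (fun _ => (N : ℤ))).prod
      (Set.finite_univ (α := Finset ι))) fun c hc => ⟨?_, trivial⟩
    have h := hc (corner_mem_gridCell c)
    rw [mem_closedBall_zero_iff, pi_norm_le_iff_of_nonneg (Nat.cast_nonneg N)] at h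
    have h' : ∀ j, -(N : ℤ) ≤ c.1 j ∧ c.1 j ≤ N := fun j => by
      have := abs_le.1 (h j)
      exact ⟨by exact_mod_cast this.1, by exact_mod_cast this.2⟩
    exact ⟨fun j => (h' j).1, fun j => (h' j).2⟩
  obtain ⟨g, hg, hgT, hgΦ⟩ := key hfin.toFinset (by simp)
    (fun c hc b hbc _ => hfin.mem_toFinset.2 (hbc.trans (hfin.mem_toFinset.1 hc)))
  refine ⟨g, hg.mono fun x hx => ?_, fun c hc => hgT c (by simpa using hc),
    fun c hc hcb => hgΦ c (by simpa using hcb) hc⟩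
  obtain ⟨c, hxc, hc, -⟩ := exists_gridCell_of_mem_closedBall hx
  exact mem_biUnion (show c ∈ hfin.toFinset by simpa using hc) hxc

end Grid

section Gluing

variable {ι : Type*} [Fintype ι]

/-- The cells of a sufficiently fine grid of the cube are subordinate to a given open cover. -/
lemma exists_grid_subordinate {κ : Type*} {O : κ → Set (ι → ℝ)} (hO : ∀ k, IsOpen (O k))
    (hcov : closedBall 0 1 ⊆ ⋃ k, O k) :
    ∃ N : ℕ, 0 < N ∧ ∀ c : (ι → ℤ) × Finset ι, gridCell c ⊆ closedBall 0 (N : ℝ) →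
      ∃ k, ∀ z ∈ gridCell c, (N : ℝ)⁻¹ • z ∈ O k := by
  obtain ⟨δ, hδ, h⟩ := lebesgue_number_lemma_of_metric (isCompact_closedBall (0 : ι → ℝ) 1) hO hcov
  obtain ⟨n, hn⟩ := exists_nat_one_div_lt hδ
  have hpos : (0 : ℝ) < ((n + 1 : ℕ) : ℝ) := by positivity
  refine ⟨n + 1, n.succ_pos, fun c hc => ?_⟩
  have hz := hc (corner_mem_gridCell c)
  obtain ⟨k, hk⟩ := h (((n + 1 : ℕ) : ℝ)⁻¹ • fun j => (c.1 j : ℝ)) (by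
    rw [mem_closedBall_zero_iff] at hz ⊢
    rw [norm_smul, norm_inv, Real.norm_of_nonneg hpos.le]
    exact (inv_mul_le_one₀ hpos).2 hz)
  refine ⟨k, fun z hzc => hk ?_⟩
  rw [Metric.mem_ball, dist_smul₀, norm_inv, Real.norm_of_nonneg hpos.le]
  refine lt_of_le_of_lt ?_ hn
  rw [one_div, Nat.cast_succ]
  exact mul_le_of_le_one_right (by positivity) (gridCell_dist_le hzc (corner_mem_gridCell c))

lemma mapsTo_inv_smul_closedBall {N : ℕ} (hN : 0 < N) :
    MapsTo (fun z : ι → ℝ => (N : ℝ)⁻¹ • z) (closedBall 0 (N : ℝ)) (closedBall 0 1) := by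
  have hpos : (0 : ℝ) < N := by exact_mod_cast hN
  intro z hz
  rw [mem_closedBall_zero_iff] at hz ⊢
  rw [norm_smul, norm_inv, Real.norm_of_nonneg hpos.le]
  exact (inv_mul_le_one₀ hpos).2 hz

/-- A map on the cube of radius `N` which restricts on the boundary to a rescaling of `f` gives
an extension of `f` to the unit cube. -/
lemma exists_extension_of_grid_extension {X : Type*} [TopologicalSpace X] {T : Set X} {N : ℕ}
    (hN : 0 < N) {f g : (ι → ℝ) → X} (hg : ContinuousOn g (closedBall 0 (N : ℝ)))
    (hgT : MapsTo g (closedBall 0 (N : ℝ)) T)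
    (hgf : ∀ z ∈ sphere (0 : ι → ℝ) N, g z = f ((N : ℝ)⁻¹ • z)) :
    ∃ g : (ι → ℝ) → X, ContinuousOn g (closedBall 0 1) ∧ MapsTo g (closedBall 0 1) T ∧
      EqOn g f (sphere 0 1) := by
  have hpos : (0 : ℝ) < N := by exact_mod_cast hN
  have hm : MapsTo (fun x : ι → ℝ => (N : ℝ) • x) (closedBall 0 1) (closedBall 0 (N : ℝ)) := by
    intro x hx
    rw [mem_closedBall_zero_iff] at hx ⊢
    rw [norm_smul, Real.norm_of_nonneg hpos.le]
    exact mul_le_of_le_one_right hpos.le hx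
  refine ⟨fun x => g ((N : ℝ) • x), hg.comp (by fun_prop) hm, hgT.comp hm, fun x hx => ?_⟩
  have hx1 : ‖x‖ = 1 := by simpa using hx
  simp only
  rw [hgf _ (by simp [norm_smul, hx1]), smul_smul, inv_mul_cancel₀ hpos.ne', one_smul]

variable {X : Type*} [TopologicalSpace X] {U V : Set X}

/-- A set is `m`-connected if maps to it from the boundary of a cube of dimension at most `m + 1`
extend to the cube. -/
def IsCubeConnected (m : ℤ) (T : Set X) : Prop :=
  ∀ (ι : Type) [Fintype ι], (Fintype.card ι : ℤ) ≤ m + 1 → HasCubeExtension ι T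

/-- If `U ∪ V` and `U ∩ V` are `m`-connected and `U`, `V` are open, then `U` is `m`-connected. -/
theorem IsCubeConnected.of_union_of_inter {m : ℤ} (hU : IsOpen U) (hV : IsOpen V)
    (hUV : IsCubeConnected m (U ∪ V)) (hinter : IsCubeConnected m (U ∩ V)) :
    IsCubeConnected m U := by
  classical
  intro ι _ hι f hf hfU
  obtain ⟨F, hF, hFUV, hFf⟩ := hUV ι hι f hf (hfU.mono_right subset_union_left)
  obtain ⟨OU, hOU, hOU'⟩ := continuousOn_iff'.1 hF U hU
  obtain ⟨OV, hOV, hOV'⟩ := continuousOn_iff'.1 hF V hV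
  obtain ⟨N, hN, hsmall⟩ := exists_grid_subordinate (O := fun b : Bool => if b then OU else OV)
    (by rintro (_ | _) <;> simpa) (by
      intro x hx
      rcases hFUV hx with h | h
      · exact mem_iUnion.2 ⟨true, by simpa using (hOU'.subset ⟨h, hx⟩).1⟩
      · exact mem_iUnion.2 ⟨false, by simpa using (hOV'.subset ⟨h, hx⟩).1⟩)
  have hscale := mapsTo_inv_smul_closedBall (ι := ι) hN
  let F' : (ι → ℝ) → X := fun z => F ((N : ℝ)⁻¹ • z)
  have hF' : ContinuousOn F' (closedBall 0 (N : ℝ)) := hF.comp (by fun_prop) hscale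
  have hcell : ∀ c : (ι → ℤ) × Finset ι, gridCell c ⊆ closedBall 0 (N : ℝ) →
      MapsTo F' (gridCell c) U ∨ MapsTo F' (gridCell c) V := by
    intro c hc
    obtain ⟨b, hb⟩ := hsmall c hc
    cases b
    · exact .inr fun z hz => (hOV'.superset ⟨by simpa using hb z hz, hscale (hc hz)⟩).1
    · exact .inl fun z hz => (hOU'.superset ⟨by simpa using hb z hz, hscale (hc hz)⟩).1
  let T : (ι → ℤ) × Finset ι → Set X := fun c =>
    if MapsTo F' (gridCell c) V then U ∩ V else U
  have hTU : ∀ c, T c ⊆ U := by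
    intro c
    by_cases h : MapsTo F' (gridCell c) V <;> simp [T, h]
  have hsphere : ∀ z ∈ sphere (0 : ι → ℝ) N, F' z = f ((N : ℝ)⁻¹ • z) ∧
      (N : ℝ)⁻¹ • z ∈ sphere (0 : ι → ℝ) 1 := by
    intro z hz
    have : (N : ℝ)⁻¹ • z ∈ sphere (0 : ι → ℝ) 1 := by
      have hz' : ‖z‖ = N := by simpa using hz
      have hpos : (0 : ℝ) < N := by exact_mod_cast hN
      simp [norm_smul, hz', hpos.ne']
    exact ⟨hFf this, this⟩
  obtain ⟨g, hg, hgT, hgΦ⟩ := exists_extension_of_gridCell_carrier N T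
    {c | gridCell c ⊆ closedBall 0 (N : ℝ) ∧ MapsTo F' (gridCell c) U} F'
    (fun c hc b hbc => ⟨hbc.trans hc.1, hc.2.mono_left hbc⟩)
    (by
      intro c b _ hbc _
      by_cases h : MapsTo F' (gridCell c) V
      · simp [T, h, h.mono_left hbc]
      · simpa [T, h] using hTU b)
    (fun c hc => hF'.mono hc.1)
    (by
      intro c hc z hz
      by_cases h : MapsTo F' (gridCell c) V
      · simp only [T, h, if_true]; exact ⟨hc.2 hz, h hz⟩
      · simp only [T, h, if_false]; exact hc.2 hz)
    (by
      intro c hc hcΦ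
      have h : MapsTo F' (gridCell c) V := (hcell c hc).resolve_left fun h => hcΦ ⟨hc, h⟩
      simp only [T, h, if_true]
      refine hinter c.2 (le_trans ?_ hι)
      rw [Fintype.card_coe]
      exact_mod_cast Finset.card_le_univ _)
  refine exists_extension_of_grid_extension hN hg ?_ ?_
  · intro z hz
    obtain ⟨c, hzc, hc, -⟩ := exists_gridCell_of_mem_closedBall hz
    exact hTU c (hgT c hc hzc)
  · intro z hz
    obtain ⟨c, hzc, hc, hcs⟩ := exists_gridCell_of_mem_closedBall (sphere_subset_closedBall hz)
    rw [← (hsphere z hz).1]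
    refine hgΦ c ⟨hc, fun y hy => ?_⟩ hc hzc
    obtain ⟨h1, h2⟩ := hsphere y (hcs hz hy)
    rw [h1]
    exact hfU h2

/-- If the open sets `U`, `V` are `m`-connected and `U ∩ V` is `(m - 1)`-connected, then `U ∪ V`
is `m`-connected. -/
theorem IsCubeConnected.union {m : ℤ} (hUo : IsOpen U) (hVo : IsOpen V)
    (hU : IsCubeConnected m U) (hV : IsCubeConnected m V)
    (hinter : IsCubeConnected (m - 1) (U ∩ V)) : IsCubeConnected m (U ∪ V) := by
  classical
  intro ι _ hι f hf hfT
  rcases isEmpty_or_nonempty ι with hempty | hnonempty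
  · have hs : sphere (0 : ι → ℝ) 1 = ∅ := by
      ext x; simp [Subsingleton.elim x 0]
    obtain ⟨g, hg, hgU, hgf⟩ := hU ι hι f hf (hs ▸ mapsTo_empty _ _)
    exact ⟨g, hg, hgU.mono_right subset_union_left, hgf⟩
  have hcard : 1 ≤ Fintype.card ι := Fintype.card_pos
  have : Nonempty X := ⟨f 0⟩
  obtain ⟨p, hp⟩ : ∃ p, p ∈ U ∩ V := by
    have hs : sphere (0 : Empty → ℝ) 1 = ∅ := by
      ext x; simp [Subsingleton.elim x 0]
    obtain ⟨g, -, hg, -⟩ := hinter Empty (by simp; omega) (fun _ => f 0) (by simp [hs])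
      (hs ▸ mapsTo_empty _ _)
    exact ⟨_, hg (mem_closedBall_self zero_le_one)⟩
  let F : (ι → ℝ) → X := fun x => f (‖x‖⁻¹ • x)
  have hnorm : ∀ x ∈ ({0}ᶜ : Set (ι → ℝ)), ‖x‖ ≠ 0 := fun x hx => norm_ne_zero_iff.2 hx
  have hproj : MapsTo (fun x : ι → ℝ => ‖x‖⁻¹ • x) {0}ᶜ (sphere 0 1) := by
    intro x hx
    simp [norm_smul, hnorm x hx]
  have hF : ContinuousOn F {0}ᶜ := hf.comp (by fun_prop (disch := assumption)) hproj
  have hO : ∀ W, IsOpen W → IsOpen ({0}ᶜ ∩ F ⁻¹' W) := fun W hW =>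
    hF.isOpen_inter_preimage isOpen_compl_singleton hW
  obtain ⟨N, hN, hsmall⟩ := exists_grid_subordinate
    (O := fun b : Option Bool => b.elim (ball (0 : ι → ℝ) (1 / 2))
      fun b => if b then {0}ᶜ ∩ F ⁻¹' U else {0}ᶜ ∩ F ⁻¹' V)
    (by
      rintro (_ | _ | _)
      · exact isOpen_ball
      · simpa using hO V hVo
      · simpa using hO U hUo)
    (by
      intro x _
      by_cases hx : x = 0
      · exact mem_iUnion.2 ⟨none, by simp [hx]⟩
      · rcases hfT (hproj hx) with h | h
        · exact mem_iUnion.2 ⟨some true, ⟨hx, h⟩⟩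
        · exact mem_iUnion.2 ⟨some false, ⟨hx, h⟩⟩)
  have hpos : (0 : ℝ) < N := by exact_mod_cast hN
  let F' : (ι → ℝ) → X := fun z => F ((N : ℝ)⁻¹ • z)
  let D : Set (ι → ℝ) := ball 0 (N / 2)
  have hcell : ∀ c : (ι → ℤ) × Finset ι, gridCell c ⊆ closedBall 0 (N : ℝ) → ¬ gridCell c ⊆ D →
      MapsTo F' (gridCell c) U ∨ MapsTo F' (gridCell c) V := by
    intro c hc hcD
    obtain ⟨b, hb⟩ := hsmall c hc
    rcases b with _ | _ | _
    · refine absurd (fun z hz => ?_) hcD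
      have h : ‖(N : ℝ)⁻¹ • z‖ < 1 / 2 := by simpa using hb z hz
      rw [norm_smul, norm_inv, Real.norm_of_nonneg hpos.le, inv_mul_lt_iff₀ hpos] at h
      simp only [D, mem_ball_zero_iff]
      linarith
    · exact .inr fun z hz => (hb z hz).2
    · exact .inl fun z hz => (hb z hz).2
  let T : (ι → ℤ) × Finset ι → Set X := fun c =>
    if gridCell c ⊆ D ∨ (c.2.card < Fintype.card ι ∧ MapsTo F' (gridCell c) (U ∩ V)) then U ∩ V
    else if MapsTo F' (gridCell c) U then U else V
  have hTUV : ∀ c, T c ⊆ U ∪ V := by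
    intro c
    simp only [T]
    split_ifs
    · exact inter_subset_left.trans subset_union_left
    · exact subset_union_left
    · exact subset_union_right
  have hsphere : ∀ z ∈ sphere (0 : ι → ℝ) N, F' z = f ((N : ℝ)⁻¹ • z) := by
    intro z hz
    have hz' : ‖z‖ = N := by simpa using hz
    simp [F', F, norm_smul, hz', hpos.ne']
  have hDsphere : ∀ c : (ι → ℤ) × Finset ι, gridCell c ⊆ sphere 0 (N : ℝ) → ¬ gridCell c ⊆ D := by
    intro c hc hcD
    have h1 := hc (corner_mem_gridCell c)
    have h2 := hcD (corner_mem_gridCell c)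
    simp only [D, mem_ball_zero_iff, mem_sphere_zero_iff_norm] at h1 h2
    linarith
  have hF'sphere : ContinuousOn F' (sphere 0 (N : ℝ)) := by
    refine hF.comp (by fun_prop) fun z hz => ?_
    have hz' : ‖z‖ = N := by simpa using hz
    have : z ≠ 0 := by rintro rfl; simp at hz'; linarith
    simp [this, hpos.ne']
  let g₀ : (ι → ℝ) → X := fun z => if z ∈ D then p else F' z
  have hg₀D : ∀ c : (ι → ℤ) × Finset ι, gridCell c ⊆ D → EqOn g₀ (fun _ => p) (gridCell c) :=
    fun c hc z hz => if_pos (hc hz)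
  have hg₀s : EqOn g₀ F' (sphere 0 (N : ℝ)) := by
    intro z hz
    refine if_neg fun h => ?_
    simp only [D, mem_ball_zero_iff, mem_sphere_zero_iff_norm] at h hz
    linarith
  obtain ⟨g, hg, hgT, hgΦ⟩ := exists_extension_of_gridCell_carrier N T
    {c | gridCell c ⊆ D ∨ gridCell c ⊆ sphere 0 (N : ℝ)} g₀
    (fun c hc b hbc => hc.imp hbc.trans hbc.trans)
    (by
      intro c b hc hbc hbcard
      have hbcard' : b.2.card < Fintype.card ι := hbcard.trans_le (Finset.card_le_univ _)
      by_cases hD : gridCell c ⊆ D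
      · simp [T, hD, hbc.trans hD]
      by_cases hUV : MapsTo F' (gridCell c) (U ∩ V)
      · simp only [T, hUV.mono_left hbc, hbcard', and_self, or_true, if_true]
        split_ifs
        exacts [subset_rfl, inter_subset_left, inter_subset_right]
      by_cases hcU : MapsTo F' (gridCell c) U
      · have hbU := hcU.mono_left hbc
        simp only [T, hD, hUV, and_false, or_false, if_false, hcU, if_true, hbU]
        split_ifs
        exacts [inter_subset_left, subset_rfl]
      · have hbV := ((hcell c hc hD).resolve_left hcU).mono_left hbc
        simp only [T, hD, hUV, and_false, or_false, if_false, hcU]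
        split_ifs with h1 h2
        · exact inter_subset_right
        · exact absurd (.inr ⟨hbcard', fun z hz => ⟨h2 hz, hbV hz⟩⟩) h1
        · exact subset_rfl)
    (by
      rintro c (hc | hc)
      · exact continuousOn_const.congr (hg₀D c hc)
      · exact (hF'sphere.congr hg₀s).mono hc)
    (by
      rintro c (hc | hc)
      · intro z hz
        rw [hg₀D c hc hz]
        simpa [T, hc] using hp
      · have hcell' := hcell c (hc.trans sphere_subset_closedBall) (hDsphere c hc)
        intro z hz
        rw [hg₀s (hc hz)]
        simp only [T]
        split_ifs with h1 h2
        · exact (h1.resolve_left (hDsphere c hc)).2 hz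
        · exact h2 hz
        · exact hcell'.resolve_left h2 hz)
    (by
      intro c hc hcΦ
      have hcle : (c.2.card : ℤ) ≤ Fintype.card ι := by exact_mod_cast Finset.card_le_univ _
      simp only [T]
      split_ifs with h1 h2
      · have h3 : (c.2.card : ℤ) < Fintype.card ι := by
          exact_mod_cast (h1.resolve_left fun h => hcΦ (.inl h)).1
        exact hinter c.2 (by rw [Fintype.card_coe]; omega)
      · exact hU c.2 (by rw [Fintype.card_coe]; omega)
      · exact hV c.2 (by rw [Fintype.card_coe]; omega))
  refine exists_extension_of_grid_extension hN hg ?_ ?_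
  · intro z hz
    obtain ⟨c, hzc, hc, -⟩ := exists_gridCell_of_mem_closedBall hz
    exact hTUV c (hgT c hc hzc)
  · intro z hz
    obtain ⟨c, hzc, hc, hcs⟩ := exists_gridCell_of_mem_closedBall (sphere_subset_closedBall hz)
    rw [← hsphere z hz, ← hg₀s hz]
    exact hgΦ c (.inr (hcs hz)) hc hzc

end Gluing

section NConnected

/-- The sup-norm cube and the Euclidean ball of the same dimension are homeomorphic as pairs. -/
lemma exists_homeomorph_cube_ball {ι : Type*} [Fintype ι] {k : ℕ} (hk : Fintype.card ι = k) :
    ∃ H : (ι → ℝ) ≃ₜ EuclideanSpace ℝ (Fin k),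
      (∀ x, H x ∈ closedBall (0 : EuclideanSpace ℝ (Fin k)) 1 ↔ x ∈ closedBall (0 : ι → ℝ) 1) ∧
      ∀ x, H x ∈ sphere (0 : EuclideanSpace ℝ (Fin k)) 1 ↔ x ∈ sphere (0 : ι → ℝ) 1 := by
  let L : (ι → ℝ) ≃L[ℝ] EuclideanSpace ℝ (Fin k) :=
    ContinuousLinearEquiv.ofFinrankEq (by simp [hk])
  obtain ⟨h, -, hcl, hfr⟩ := exists_homeomorph_image_interior_closure_frontier_eq_unitBall
    (s := L '' closedBall (0 : ι → ℝ) 1)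
    ((convex_closedBall 0 1).is_linear_image L.toLinearMap.isLinear)
    ⟨0, by
      have := L.toHomeomorph.image_interior (closedBall (0 : ι → ℝ) 1)
      simp only [ContinuousLinearEquiv.coe_toHomeomorph] at this
      rw [← this]
      exact ⟨0, mem_interior_iff_mem_nhds.2 (closedBall_mem_nhds _ one_pos), map_zero L⟩⟩
    ((isCompact_closedBall _ _).image L.continuous).isBounded
  have hcl' : closure (L '' closedBall (0 : ι → ℝ) 1) = L '' closedBall (0 : ι → ℝ) 1 :=
    ((isCompact_closedBall _ _).image L.continuous).isClosed.closure_eq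
  have hfr' : frontier (L '' closedBall (0 : ι → ℝ) 1) = L '' sphere (0 : ι → ℝ) 1 := by
    have := L.toHomeomorph.image_frontier (closedBall (0 : ι → ℝ) 1)
    simp only [ContinuousLinearEquiv.coe_toHomeomorph] at this
    rw [← this, frontier_closedBall _ one_ne_zero]
  rw [hcl'] at hcl
  rw [hfr'] at hfr
  refine ⟨L.toHomeomorph.trans h, fun x => ?_, fun x => ?_⟩
  · rw [← hcl]
    simp
  · rw [← hfr]
    simp

variable {X : Type*} [TopologicalSpace X] {T : Set X} {m : ℤ}

lemma IsNConnected.isCubeConnected (h : IsNConnected m T) : IsCubeConnected m T := by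
  classical
  intro ι _ hι f hf hfT
  rcases Nat.eq_zero_or_pos (Fintype.card ι) with h0 | hpos
  · have := Fintype.card_eq_zero_iff.1 h0
    have hs : sphere (0 : ι → ℝ) 1 = ∅ := by
      ext x; simp [Subsingleton.elim x 0]
    obtain ⟨x⟩ := h.1 (by omega)
    exact ⟨fun _ => x, continuousOn_const, fun _ _ => x.2, by simp [hs]⟩
  obtain ⟨i, hi⟩ := Nat.exists_eq_succ_of_ne_zero hpos.ne'
  obtain ⟨H, hHb, hHs⟩ := exists_homeomorph_cube_ball hi
  have hs : ∀ x : sphere (0 : EuclideanSpace ℝ (Fin (i + 1))) 1, H.symm x ∈ sphere 0 1 :=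
    fun x => (hHs _).1 (by simp)
  obtain ⟨g, hg⟩ := h.2 i (by omega) ⟨fun x => ⟨f (H.symm x), hfT (hs x)⟩,
    Continuous.subtype_mk (hf.comp_continuous (by fun_prop) hs) _⟩
  refine ⟨fun x => if hx : H x ∈ closedBall 0 1 then g ⟨H x, hx⟩ else f x, ?_, ?_, ?_⟩
  · rw [continuousOn_iff_continuous_domRestrict]
    have : Continuous fun x : closedBall (0 : ι → ℝ) 1 =>
        (g ⟨H x, (hHb x).2 x.2⟩ : X) := by fun_prop
    refine this.congr fun x => ?_
    simp only [Set.domRestrict_apply]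
    rw [dif_pos ((hHb x).2 x.2)]
  · intro x hx
    simp only
    rw [dif_pos ((hHb x).2 hx)]
    exact Subtype.coe_prop _
  · intro x hx
    simp only
    rw [dif_pos ((hHb x).2 (sphere_subset_closedBall hx))]
    have := congrArg Subtype.val (hg ⟨H x, (hHs x).2 hx⟩)
    simpa using this

lemma IsCubeConnected.isNConnected [Nonempty X] (h : IsCubeConnected m T) :
    IsNConnected m T := by
  classical
  obtain ⟨x₀⟩ := ‹Nonempty X›
  refine ⟨fun hm => ?_, fun i hi f => ?_⟩
  · have hs : sphere (0 : Empty → ℝ) 1 = ∅ := by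
      ext x; simp [Subsingleton.elim x 0]
    obtain ⟨g, -, hg, -⟩ := h Empty (by simp; omega) (fun _ => x₀) (by simp [hs])
      (hs ▸ mapsTo_empty _ _)
    exact ⟨⟨_, hg (mem_closedBall_self zero_le_one)⟩⟩
  obtain ⟨H, hHb, hHs⟩ := exists_homeomorph_cube_ball (Fintype.card_fin (i + 1))
  have hF : ∀ x (hx : x ∈ sphere (0 : Fin (i + 1) → ℝ) 1),
      (fun x => if hx : H x ∈ sphere 0 1 then (f ⟨H x, hx⟩ : X) else x₀) x =
        f ⟨H x, (hHs x).2 hx⟩ := fun x hx => dif_pos ((hHs x).2 hx)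
  obtain ⟨g, hg, hgT, hgf⟩ := h (Fin (i + 1)) (by simp; omega)
    (fun x => if hx : H x ∈ sphere 0 1 then (f ⟨H x, hx⟩ : X) else x₀)
    (by
      rw [continuousOn_iff_continuous_domRestrict]
      have : Continuous fun x : sphere (0 : Fin (i + 1) → ℝ) 1 =>
          (f ⟨H x, (hHs x).2 x.2⟩ : X) := by fun_prop
      exact this.congr fun x => (hF x x.2).symm)
    (by
      intro x hx
      rw [hF x hx]
      exact Subtype.coe_prop _)
  have hb : ∀ x : closedBall (0 : EuclideanSpace ℝ (Fin (i + 1))) 1, H.symm x ∈ closedBall 0 1 :=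
    fun x => (hHb _).1 (by simp)
  refine ⟨⟨fun x => ⟨g (H.symm x), hgT (hb x)⟩,
    Continuous.subtype_mk (hg.comp_continuous (by fun_prop) hb) _⟩, fun x => ?_⟩
  have hx : H.symm x ∈ sphere 0 1 := (hHs _).1 (by simp)
  have := (hgf hx).trans (hF _ hx)
  ext
  simpa using this

end NConnected

section OpenHull

variable {V : Type*} [Fintype V] [Nonempty V]

/-- The largest coordinate of a point of `V → ℝ`. -/
def maxCoord (f : V → ℝ) : ℝ := Finset.univ.sup' Finset.univ_nonempty f

lemma le_maxCoord (f : V → ℝ) (v : V) : f v ≤ maxCoord f :=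
  Finset.le_sup' f (Finset.mem_univ v)

lemma exists_eq_maxCoord (f : V → ℝ) : ∃ v, f v = maxCoord f := by
  obtain ⟨v, -, hv⟩ := Finset.exists_mem_eq_sup' Finset.univ_nonempty f
  exact ⟨v, hv.symm⟩

lemma continuous_maxCoord : Continuous (maxCoord : (V → ℝ) → ℝ) :=
  Continuous.finset_sup'_apply _ fun v _ => continuous_apply v

/-- The points with positive maximal coordinate whose coordinates of at least half the maximum
are indexed by a face in `A`. It is an open neighborhood of the realization of `A` which retracts
onto it by deformation. -/
def openHull (A : Set (Finset V)) : Set (V → ℝ) :=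
  {f | 0 < maxCoord f ∧ ∃ s ∈ A, ∀ v, maxCoord f ≤ 2 * f v → v ∈ s}

lemma isOpen_openHull (A : Set (Finset V)) : IsOpen (openHull A) := by
  have : openHull A = {f | 0 < maxCoord f} ∩
      ⋃ s ∈ A, ⋂ v ∈ {v | v ∉ s}, {f : V → ℝ | 2 * f v < maxCoord f} := by
    ext f
    simp only [openHull, mem_ofPred_eq, mem_inter_iff, mem_iUnion, mem_iInter, exists_prop]
    refine and_congr_right fun _ => exists_congr fun s => and_congr_right fun _ =>
      forall_congr' fun v => ?_
    rw [← not_imp_not, not_le]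
  rw [this]
  refine (isOpen_lt continuous_const continuous_maxCoord).inter (isOpen_biUnion fun s _ => ?_)
  exact (Set.toFinite _).isOpen_biInter fun v _ =>
    isOpen_lt (continuous_const.mul (continuous_apply v)) continuous_maxCoord

lemma openHull_union (A B : Set (Finset V)) : openHull (A ∪ B) = openHull A ∪ openHull B := by
  ext f
  simp only [openHull, mem_ofPred_eq, mem_union]
  constructor
  · rintro ⟨h, s, hs | hs, h'⟩
    exacts [.inl ⟨h, s, hs, h'⟩, .inr ⟨h, s, hs, h'⟩]
  · rintro (⟨h, s, hs, h'⟩ | ⟨h, s, hs, h'⟩)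
    exacts [⟨h, s, .inl hs, h'⟩, ⟨h, s, .inr hs, h'⟩]

lemma openHull_inter {A B : Set (Finset V)} (hA : IsLowerSet A) (hB : IsLowerSet B) :
    openHull (A ∩ B) = openHull A ∩ openHull B := by
  classical
  ext f
  constructor
  · rintro ⟨h, s, hs, h'⟩
    exact ⟨⟨h, s, hs.1, h'⟩, ⟨h, s, hs.2, h'⟩⟩
  · rintro ⟨⟨h, s, hs, h₁⟩, ⟨-, t, ht, h₂⟩⟩
    exact ⟨h, s ∩ t, ⟨hA Finset.inter_subset_left hs, hB Finset.inter_subset_right ht⟩,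
      fun v hv => Finset.mem_inter.2 ⟨h₁ v hv, h₂ v hv⟩⟩

/-- The connectivity of a complex, expressed through its open hull, passes to unions. -/
lemma isCubeConnected_openHull_union {m : ℤ} {A B : Set (Finset V)} (hA : IsLowerSet A)
    (hB : IsLowerSet B) (hcA : IsCubeConnected m (openHull A)) (hcB : IsCubeConnected m (openHull B))
    (hinter : IsCubeConnected (m - 1) (openHull (A ∩ B))) :
    IsCubeConnected m (openHull (A ∪ B)) := by
  rw [openHull_inter hA hB] at hinter
  rw [openHull_union]
  exact IsCubeConnected.union (isOpen_openHull A) (isOpen_openHull B) hcA hcB hinter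

lemma isCubeConnected_openHull_of_union_of_inter {m : ℤ} {A B : Set (Finset V)}
    (hA : IsLowerSet A) (hB : IsLowerSet B) (hunion : IsCubeConnected m (openHull (A ∪ B)))
    (hinter : IsCubeConnected m (openHull (A ∩ B))) : IsCubeConnected m (openHull A) := by
  rw [openHull_inter hA hB] at hinter
  rw [openHull_union] at hunion
  exact IsCubeConnected.of_union_of_inter (isOpen_openHull A) (isOpen_openHull B) hunion hinter

/-- A cone is `m`-connected for every `m`. -/
lemma isCubeConnected_openHull_of_cone [DecidableEq V] {A : Set (Finset V)} (hA : A.Nonempty)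
    (v : V) (hcone : ∀ s ∈ A, insert v s ∈ A) (m : ℤ) : IsCubeConnected m (openHull A) := by
  intro ι _ _
  have hmax : maxCoord (Pi.single v (1 : ℝ)) = 1 := by
    refine le_antisymm (Finset.sup'_le _ _ fun w _ => ?_)
      (le_of_eq_of_le (by simp) (le_maxCoord (Pi.single v (1 : ℝ)) v))
    by_cases h : w = v
    · subst h; simp
    · simp [h]
  have hv : (Pi.single v (1 : ℝ) : V → ℝ) ∈ openHull A := by
    obtain ⟨s, hs⟩ := hA
    refine ⟨by simp [hmax], insert v s, hcone s hs, fun w hw => ?_⟩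
    by_contra hws
    have : w ≠ v := fun h => hws (by simp [h])
    rw [hmax, Pi.single_eq_of_ne this] at hw
    linarith
  refine HasCubeExtension.of_starConvex hv ?_
  rintro f ⟨hf, s, hs, hfs⟩ a b ha hb hab
  set g := a • (Pi.single v (1 : ℝ) : V → ℝ) + b • f with hg
  have hgv : g v = a + b * f v := by simp [hg]
  have hgw : ∀ w, w ≠ v → g w = b * f w := fun w hw => by simp [hg, hw]
  have hle : b * maxCoord f ≤ maxCoord g := by
    obtain ⟨w, hw⟩ := exists_eq_maxCoord f
    rw [← hw]
    refine le_trans ?_ (le_maxCoord g w)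
    by_cases h : w = v
    · rw [h, hgv]; linarith
    · rw [hgw w h]
  rcases hb.eq_or_lt with rfl | hb
  · have : g = Pi.single v 1 := by
      rw [hg, show a = 1 by linarith]; simp
    rwa [this]
  refine ⟨(mul_pos hb hf).trans_le hle, insert v s, hcone s hs, fun w hw => ?_⟩
  by_cases h : w = v
  · simp [h]
  · refine Finset.mem_insert_of_mem (hfs w ?_)
    rw [hgw w h] at hw
    refine le_of_mul_le_mul_left ?_ hb
    linarith

/-- The points of `V → ℝ` underlying the realization of a complex. -/
def geomSet {V : Type*} (K : Set (Finset V)) : Set (V → ℝ) :=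
  {f | (∀ v, 0 ≤ f v) ∧ (∑ᶠ v, f v) = 1 ∧ ∃ s ∈ K, {v | f v ≠ 0} = ↑s}

lemma mem_geomSet_iff {V : Type*} [Fintype V] {K : Set (Finset V)} (hK : IsLowerSet K) {f : V → ℝ} :
    f ∈ geomSet K ↔ (∀ v, 0 ≤ f v) ∧ ∑ v, f v = 1 ∧ ∃ s ∈ K, ∀ v, f v ≠ 0 → v ∈ s := by
  classical
  rw [geomSet, mem_ofPred_eq, finsum_eq_sum_of_fintype]
  refine and_congr_right fun _ => and_congr_right fun _ => ?_
  constructor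
  · rintro ⟨s, hs, h⟩
    exact ⟨s, hs, fun v hv => by rw [← Finset.mem_coe, ← h]; exact hv⟩
  · rintro ⟨s, hs, h⟩
    refine ⟨Finset.univ.filter fun v => f v ≠ 0, hK (fun v hv => h v ?_) hs, by simp⟩
    simpa using hv

/-- Cut off the coordinates below half the maximum and normalize. -/
noncomputable def truncate (f : V → ℝ) (v : V) : ℝ :=
  max (f v - maxCoord f / 2) 0 / ∑ w, max (f w - maxCoord f / 2) 0

lemma sum_truncate_pos {f : V → ℝ} (hf : 0 < maxCoord f) :
    0 < ∑ w, max (f w - maxCoord f / 2) 0 := by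
  obtain ⟨v, hv⟩ := exists_eq_maxCoord f
  exact Finset.sum_pos' (fun w _ => le_max_right _ _)
    ⟨v, Finset.mem_univ v, lt_max_of_lt_left (by linarith)⟩

lemma continuousOn_truncate : ContinuousOn (truncate : (V → ℝ) → V → ℝ) {f | 0 < maxCoord f} := by
  have h : ∀ v, Continuous fun f : V → ℝ => max (f v - maxCoord f / 2) 0 := fun v =>
    ((continuous_apply v).sub (continuous_maxCoord.div_const 2)).max continuous_const
  exact continuousOn_pi.2 fun v => (h v).continuousOn.div
    (continuous_finsetSum _ fun w _ => h w).continuousOn fun f hf => (sum_truncate_pos hf).ne'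

lemma truncate_nonneg (f : V → ℝ) (v : V) : 0 ≤ truncate f v :=
  div_nonneg (le_max_right _ _) (Finset.sum_nonneg fun _ _ => le_max_right _ _)

lemma sum_truncate {f : V → ℝ} (hf : 0 < maxCoord f) : ∑ v, truncate f v = 1 := by
  simp only [truncate]
  rw [← Finset.sum_div, div_self (sum_truncate_pos hf).ne']

lemma maxCoord_lt_of_truncate_ne_zero {f : V → ℝ} {v : V} (h : truncate f v ≠ 0) :
    maxCoord f < 2 * f v := by
  by_contra hv
  exact h (by rw [truncate, max_eq_right (by linarith), zero_div])

lemma truncate_mem_geomSet {A : Set (Finset V)} (hA : IsLowerSet A) {f : V → ℝ}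
    (hf : f ∈ openHull A) : truncate f ∈ geomSet A := by
  obtain ⟨h, s, hs, hfs⟩ := hf
  exact (mem_geomSet_iff hA).2 ⟨truncate_nonneg f, sum_truncate h, s, hs,
    fun v hv => hfs v (maxCoord_lt_of_truncate_ne_zero hv).le⟩

lemma maxCoord_pos {f : V → ℝ} (hsum : ∑ v, f v = 1) : 0 < maxCoord f := by
  by_contra! h
  have := Finset.sum_nonpos fun v (_ : v ∈ Finset.univ) => (le_maxCoord f v).trans h
  linarith

lemma geomSet_subset_openHull {A : Set (Finset V)} (hA : IsLowerSet A) :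
    geomSet A ⊆ openHull A := by
  intro f hf
  obtain ⟨-, hsum, s, hs, hfs⟩ := (mem_geomSet_iff hA).1 hf
  have hpos := maxCoord_pos hsum
  exact ⟨hpos, s, hs, fun v hv => hfs v fun h => by rw [h] at hv; linarith⟩

lemma segment_truncate_subset_openHull {A : Set (Finset V)} {f : V → ℝ} (hf : f ∈ openHull A) :
    segment ℝ f (truncate f) ⊆ openHull A := by
  obtain ⟨h, s, hs, hfs⟩ := hf
  rintro _ ⟨a, b, ha, hb, hab, rfl⟩
  set g := a • f + b • truncate f with hg
  have hgv : ∀ v, g v = a * f v + b * truncate f v := fun v => by simp [hg]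
  obtain ⟨v, hv⟩ := exists_eq_maxCoord f
  have hpos : 0 < truncate f v := by
    rw [truncate]
    exact div_pos (lt_max_of_lt_left (by linarith)) (sum_truncate_pos h)
  have hle : a * maxCoord f + b * truncate f v ≤ maxCoord g := by
    have := le_maxCoord g v
    rwa [hgv, hv] at this
  have hmax : 0 < a * maxCoord f + b * truncate f v := by
    rcases ha.eq_or_lt with rfl | ha
    · rw [show b = 1 by linarith]; linarith
    · nlinarith [mul_pos ha h, mul_nonneg hb hpos.le]
  refine ⟨hmax.trans_le hle, s, hs, fun w hw => ?_⟩
  by_contra hws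
  have hfw : 2 * f w < maxCoord f := by
    by_contra! h'
    exact hws (hfs w h')
  have hτ : truncate f w = 0 := by
    by_contra h'
    linarith [maxCoord_lt_of_truncate_ne_zero h']
  rw [hgv, hτ] at hw
  rcases ha.eq_or_lt with rfl | ha
  · linarith
  · nlinarith [mul_lt_mul_of_pos_left hfw ha, mul_nonneg hb hpos.le]

lemma segment_truncate_subset_geomSet {A : Set (Finset V)} (hA : IsLowerSet A) {f : V → ℝ}
    (hf : f ∈ geomSet A) : segment ℝ f (truncate f) ⊆ geomSet A := by
  obtain ⟨hnn, hsum, s, hs, hfs⟩ := (mem_geomSet_iff hA).1 hf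
  have hpos := maxCoord_pos hsum
  rintro _ ⟨a, b, ha, hb, hab, rfl⟩
  refine (mem_geomSet_iff hA).2 ⟨fun v => ?_, ?_, s, hs, fun v hv => hfs v fun h => hv ?_⟩
  · exact add_nonneg (mul_nonneg ha (hnn v)) (mul_nonneg hb (truncate_nonneg f v))
  · simp only [Pi.add_apply, Pi.smul_apply, smul_eq_mul, Finset.sum_add_distrib,
      ← Finset.mul_sum, hsum, sum_truncate hpos]
    linarith
  · have : truncate f v = 0 := by
      by_contra h'
      linarith [maxCoord_lt_of_truncate_ne_zero h']
    simp [h, this]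

lemma IsCubeConnected.isNConnected_realization {m : ℤ} {K : Set (Finset V)} (hK : IsLowerSet K)
    (h : IsCubeConnected m (openHull K)) : IsNConnected m (realization K) := by
  have : IsCubeConnected m (geomSet K) := fun ι _ hι =>
    HasCubeExtension.of_segment (h ι hι) truncate id
      (continuousOn_truncate.mono fun f hf => hf.1)
      (fun f hf => truncate_mem_geomSet hK hf) continuousOn_id
      (fun f hf => geomSet_subset_openHull hK hf)
      (fun f hf => segment_truncate_subset_geomSet hK hf)
  exact this.isNConnected

/-- A complex on a subset `W` of the vertices, seen as a complex on all vertices, inherits the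
connectivity of its realization. -/
lemma IsNConnected.isCubeConnected_openHull {m : ℤ} {W : Set V} {K : Set (Finset W)}
    {A : Set (Finset V)} (hK : IsLowerSet K) (hA : IsLowerSet A)
    (hKA : ∀ t ∈ K, t.map (Function.Embedding.subtype _) ∈ A)
    (hAK : ∀ s ∈ A, ∃ t ∈ K, t.map (Function.Embedding.subtype _) = s)
    (h : IsNConnected m (realization K)) : IsCubeConnected m (openHull A) := by
  classical
  let j : (W → ℝ) → V → ℝ := fun f v => if hv : v ∈ W then f ⟨v, hv⟩ else 0
  let r : (V → ℝ) → W → ℝ := fun f w => truncate f w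
  have hj : Continuous j := continuous_pi fun v => by
    by_cases hv : v ∈ W
    · simpa [j, hv] using continuous_apply (⟨v, hv⟩ : W)
    · simpa [j, hv] using continuous_const
  have hjsum : ∀ f, ∑ v, j f v = ∑ w, f w := fun f => by
    rw [← Finset.sum_subset (Finset.subset_univ (Finset.univ.map (Function.Embedding.subtype (· ∈ W))))]
    · rw [Finset.sum_map]
      exact Finset.sum_congr rfl fun w _ => by simp [j]
    · intro v _ hv
      have : v ∉ W := fun hvW => hv (by simpa using hvW)
      simp [j, this]
  have hjr : ∀ f ∈ openHull A, j (r f) = truncate f := by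
    rintro f ⟨h0, s, hs, hfs⟩
    ext v
    by_cases hv : v ∈ W
    · simp [j, r, hv]
    · simp only [j, hv, dite_false]
      by_contra hne
      have hvs := hfs v (maxCoord_lt_of_truncate_ne_zero (Ne.symm hne)).le
      obtain ⟨t, -, rfl⟩ := hAK s hs
      obtain ⟨w, -, rfl⟩ := Finset.mem_map.1 hvs
      exact hv w.2
  have hT' : IsCubeConnected m (geomSet K) := IsNConnected.isCubeConnected h
  intro ι _ hι
  refine HasCubeExtension.of_segment (hT' ι hι) j r hj.continuousOn ?_ ?_ ?_ ?_
  · intro f hf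
    obtain ⟨hnn, hsum, t, ht, hft⟩ := (mem_geomSet_iff hK).1 hf
    refine geomSet_subset_openHull hA ((mem_geomSet_iff hA).2
      ⟨fun v => ?_, (hjsum f).trans hsum, _, hKA t ht, fun v hv => ?_⟩)
    · by_cases hv : v ∈ W
      · simpa [j, hv] using hnn _
      · simp [j, hv]
    · by_cases hvW : v ∈ W
      · simp only [j, hvW, dite_true] at hv
        exact Finset.mem_map.2 ⟨_, hft _ hv, rfl⟩
      · simp [j, hvW] at hv
  · have : ContinuousOn (truncate : (V → ℝ) → V → ℝ) (openHull A) :=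
      continuousOn_truncate.mono fun f hf => hf.1
    exact continuousOn_pi.2 fun w => continuousOn_pi.1 this w
  · intro f hf
    obtain ⟨hnn, hsum, s, hs, hfs⟩ := (mem_geomSet_iff hA).1 (truncate_mem_geomSet hA hf)
    obtain ⟨t, ht, rfl⟩ := hAK s hs
    refine (mem_geomSet_iff hK).2 ⟨fun w => hnn w, ?_, t, ht, fun w hw => ?_⟩
    · rw [← hjsum, hjr f hf, hsum]
    · simpa using hfs w hw
  · intro f hf
    rw [hjr f hf]
    exact segment_truncate_subset_openHull hf

end OpenHull

section IndependenceComplex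

variable {V : Type*} {G : SimpleGraph V}

lemma isLowerSet_indepFaces (G : SimpleGraph V) : IsLowerSet (indepFaces G) :=
  fun _ _ hts hs a ha b hb => hs a (hts ha) b (hts hb)

lemma insert_mem_indepFaces_iff [DecidableEq V] {v : V} {s : Finset V} :
    insert v s ∈ indepFaces G ↔ s ∈ indepFaces G ∧ ∀ x ∈ s, ¬ G.Adj v x := by
  simp only [indepFaces, mem_ofPred_eq, Finset.mem_insert, forall_eq_or_imp, G.irrefl,
    not_false_eq_true, true_and]
  exact ⟨fun h => ⟨fun a ha => (h.2 a ha).2, h.1⟩,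
    fun h => ⟨h.2, fun a ha => ⟨fun h' => h.2 a ha h'.symm, h.1 a ha⟩⟩⟩

/-- The faces of the independence complex which satisfy a condition at every vertex. -/
def indepFacesOn (G : SimpleGraph V) (W : Set V) : Set (Finset V) :=
  {s | s ∈ indepFaces G ∧ ∀ x ∈ s, x ∈ W}

lemma isLowerSet_indepFacesOn (G : SimpleGraph V) (W : Set V) : IsLowerSet (indepFacesOn G W) :=
  fun _ _ hts hs => ⟨isLowerSet_indepFaces G hts hs.1, fun x hx => hs.2 x (hts hx)⟩

lemma empty_mem_indepFacesOn (G : SimpleGraph V) (W : Set V) : ∅ ∈ indepFacesOn G W := by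
  simp [indepFacesOn, indepFaces]

variable [Fintype V] [Nonempty V]

lemma isCubeConnected_openHull_indepFacesOn {m : ℤ} {W : Set V}
    (h : IsNConnected m (realization (indepFaces (G.induce W)))) :
    IsCubeConnected m (openHull (indepFacesOn G W)) := by
  classical
  refine h.isCubeConnected_openHull (isLowerSet_indepFaces _) (isLowerSet_indepFacesOn G W) ?_ ?_
  · intro t ht
    constructor
    · intro a ha b hb
      obtain ⟨a, hat, rfl⟩ := Finset.mem_map.1 ha
      obtain ⟨b, hbt, rfl⟩ := Finset.mem_map.1 hb
      exact ht a hat b hbt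
    · intro x hx
      obtain ⟨a, ha, rfl⟩ := Finset.mem_map.1 hx
      exact a.2
  · rintro s ⟨hs, hsW⟩
    refine ⟨s.subtype (· ∈ W), fun a ha b hb => ?_, Finset.subtype_map_of_mem hsW⟩
    exact hs a (Finset.mem_subtype.1 ha) b (Finset.mem_subtype.1 hb)

/-- The star of a vertex in the independence complex is a cone, also after restricting the
vertices. -/
lemma isCubeConnected_openHull_star {W : Set V} {v : V} (hvW : v ∈ W)
    (hW : ∀ x ∈ W, ¬ G.Adj v x) (m : ℤ) : IsCubeConnected m (openHull (indepFacesOn G W)) := by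
  classical
  refine isCubeConnected_openHull_of_cone ⟨∅, empty_mem_indepFacesOn G W⟩ v (fun s hs => ?_) m
  exact ⟨insert_mem_indepFaces_iff.2 ⟨hs.1, fun x hx => hW x (hs.2 x hx)⟩,
    fun x hx => (Finset.mem_insert.1 hx).elim (fun h => h ▸ hvW) (hs.2 x)⟩

/-- Covering the independence complex by the stars of `u` and of its two neighbors. -/
lemma isCubeConnected_openHull_indepFaces_of_neighborSet_eq_pair {u v₁ v₂ : V} {m : ℤ}
    (hnadj : ¬ G.Adj v₁ v₂) (hNu : G.neighborSet u = {v₁, v₂})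
    (h : IsCubeConnected (m - 1) (openHull
      {s | s ∈ indepFacesOn G (G.closedNbhd u ∪ (G.neighborSet v₁ ∩ G.neighborSet v₂))ᶜ ∧
        ((∀ x ∈ s, ¬ G.Adj v₁ x) ∨ ∀ x ∈ s, ¬ G.Adj v₂ x)})) :
    IsCubeConnected m (openHull (indepFaces G)) := by
  have hu : ∀ x, G.Adj u x ↔ x = v₁ ∨ x = v₂ := fun x => by
    rw [← G.mem_neighborSet, hNu]; rfl
  have hlow : ∀ W, IsLowerSet (indepFacesOn G W) := isLowerSet_indepFacesOn G
  have hX : IsLowerSet (indepFacesOn G {x | ¬ G.Adj v₁ x} ∪ indepFacesOn G {x | ¬ G.Adj v₂ x}) :=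
    (hlow _).union (hlow _)
  have hstars : IsCubeConnected m
      (openHull (indepFacesOn G {x | ¬ G.Adj v₁ x} ∪ indepFacesOn G {x | ¬ G.Adj v₂ x})) := by
    refine isCubeConnected_openHull_union (hlow _) (hlow _)
      (isCubeConnected_openHull_star (v := v₁) (by simp) (by simp) m)
      (isCubeConnected_openHull_star (v := v₂) (by simp) (by simp) m) ?_
    have : indepFacesOn G {x | ¬ G.Adj v₁ x} ∩ indepFacesOn G {x | ¬ G.Adj v₂ x} =
        indepFacesOn G {x | ¬ G.Adj v₁ x ∧ ¬ G.Adj v₂ x} := by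
      ext s
      exact ⟨fun h => ⟨h.1.1, fun x hx => ⟨h.1.2 x hx, h.2.2 x hx⟩⟩,
        fun h => ⟨⟨h.1, fun x hx => (h.2 x hx).1⟩, h.1, fun x hx => (h.2 x hx).2⟩⟩
    rw [this]
    refine isCubeConnected_openHull_star (v := v₁) ?_ (fun x hx => hx.1) _
    exact ⟨by simp, fun h => hnadj h.symm⟩
  have hcover : indepFaces G = (indepFacesOn G {x | ¬ G.Adj v₁ x} ∪
      indepFacesOn G {x | ¬ G.Adj v₂ x}) ∪ indepFacesOn G {x | ¬ G.Adj u x} := by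
    ext s
    constructor
    · intro hs
      by_cases h₁ : v₁ ∈ s
      · exact .inl (.inl ⟨hs, fun x hx => hs _ h₁ x hx⟩)
      by_cases h₂ : v₂ ∈ s
      · exact .inl (.inr ⟨hs, fun x hx => hs _ h₂ x hx⟩)
      refine .inr ⟨hs, fun x hx h => ?_⟩
      rcases (hu x).1 h with rfl | rfl
      exacts [h₁ hx, h₂ hx]
    · rintro ((hs | hs) | hs)
      exacts [hs.1, hs.1, hs.1]
  rw [hcover]
  refine isCubeConnected_openHull_union hX (hlow _) hstars
    (isCubeConnected_openHull_star (v := u) (by simp) (by simp) m) ?_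
  convert h using 2
  ext s
  have huv₁ : G.Adj v₁ u := ((hu v₁).2 (.inl rfl)).symm
  have huv₂ : G.Adj v₂ u := ((hu v₂).2 (.inr rfl)).symm
  have key : ∀ x, x ∈ (G.closedNbhd u ∪ (G.neighborSet v₁ ∩ G.neighborSet v₂))ᶜ ↔
      x ≠ u ∧ ¬ G.Adj u x ∧ ¬ (G.Adj v₁ x ∧ G.Adj v₂ x) := fun x => by
    simp [SimpleGraph.closedNbhd, and_assoc]
  simp only [indepFacesOn, mem_inter_iff, mem_union, mem_ofPred_eq, key]
  constructor
  · rintro ⟨⟨hs, h'⟩ | ⟨hs, h'⟩, -, hsu⟩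
    · exact ⟨⟨hs, fun x hx => ⟨fun h => h' x hx (h ▸ huv₁), hsu x hx, fun h => h' x hx h.1⟩⟩,
        .inl h'⟩
    · exact ⟨⟨hs, fun x hx => ⟨fun h => h' x hx (h ▸ huv₂), hsu x hx, fun h => h' x hx h.2⟩⟩,
        .inr h'⟩
  · rintro ⟨⟨hs, h'⟩, h | h⟩
    · exact ⟨.inl ⟨hs, h⟩, hs, fun x hx => (h' x hx).2.1⟩
    · exact ⟨.inr ⟨hs, h⟩, hs, fun x hx => (h' x hx).2.1⟩

/-- Removing from a complex the open star of an edge `{w₁, w₂}`: the complex of the remaining faces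
is connected if the complex and the link of the edge are. -/
lemma isCubeConnected_openHull_remove_edge [DecidableEq V] {A F : Set (Finset V)} {w₁ w₂ : V}
    {m : ℤ} (hA : IsLowerSet A) (hw : w₁ ≠ w₂)
    (hF : ∀ s, s ∈ F ↔ insert w₁ (insert w₂ s) ∈ A ∧ w₁ ∉ s ∧ w₂ ∉ s) (hF₀ : F.Nonempty)
    (hcA : IsCubeConnected m (openHull A)) (hcF : IsCubeConnected (m - 1) (openHull F)) :
    IsCubeConnected m (openHull {s | s ∈ A ∧ ¬ (w₁ ∈ s ∧ w₂ ∈ s)}) := by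
  have hstar : ∀ p : Finset V → Prop, (∀ s t, t ⊆ s → p s → p t) →
      IsLowerSet {s | insert w₁ (insert w₂ s) ∈ A ∧ p s} := fun p hp s t hts hs =>
    ⟨hA (Finset.insert_subset_insert _ (Finset.insert_subset_insert _ hts)) hs.1, hp s t hts hs.2⟩
  have hsub : ∀ s, insert w₁ (insert w₂ s) ∈ A → s ∈ A := fun s hs =>
    hA ((Finset.subset_insert _ _).trans (Finset.subset_insert _ _)) hs
  have hlow : IsLowerSet {s | s ∈ A ∧ ¬ (w₁ ∈ s ∧ w₂ ∈ s)} := fun s t hts hs =>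
    ⟨hA hts hs.1, fun h => hs.2 ⟨hts h.1, hts h.2⟩⟩
  have hlow₁ := hstar (w₁ ∉ ·) fun s t hts h h' => h (hts h')
  have hlow₂ := hstar (w₂ ∉ ·) fun s t hts h h' => h (hts h')
  obtain ⟨s₀, hs₀⟩ := hF₀
  rw [hF] at hs₀
  refine isCubeConnected_openHull_of_union_of_inter (B := {s | insert w₁ (insert w₂ s) ∈ A ∧ True})
    hlow (hstar _ fun _ _ _ h => h) ?_ ?_
  · convert hcA using 2
    ext s
    simp only [mem_union, mem_ofPred_eq, and_true]
    refine ⟨fun h => h.elim And.left (hsub s), fun h => ?_⟩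
    by_cases h' : w₁ ∈ s ∧ w₂ ∈ s
    · exact .inr (by rwa [Finset.insert_eq_of_mem h'.2, Finset.insert_eq_of_mem h'.1])
    · exact .inl ⟨h, h'⟩
  · have : {s | s ∈ A ∧ ¬ (w₁ ∈ s ∧ w₂ ∈ s)} ∩ {s | insert w₁ (insert w₂ s) ∈ A ∧ True} =
        {s | insert w₁ (insert w₂ s) ∈ A ∧ w₁ ∉ s} ∪
          {s | insert w₁ (insert w₂ s) ∈ A ∧ w₂ ∉ s} := by
      ext s
      have := hsub s
      simp only [mem_inter_iff, mem_union, mem_ofPred_eq, and_true]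
      tauto
    rw [this]
    refine isCubeConnected_openHull_union hlow₁ hlow₂ ?_ ?_ ?_
    · refine isCubeConnected_openHull_of_cone ?_ w₂ (fun s hs => ?_) m
      · exact ⟨s₀, hs₀.1, hs₀.2.1⟩
      simpa [hw] using hs
    · refine isCubeConnected_openHull_of_cone ?_ w₁ (fun s hs => ?_) m
      · exact ⟨s₀, hs₀.1, hs₀.2.2⟩
      rw [mem_ofPred_eq, Finset.insert_comm w₂ w₁, Finset.insert_idem]
      simpa [hw.symm] using hs
    · convert hcF using 2
      ext s
      rw [hF]
      simp only [mem_inter_iff, mem_ofPred_eq]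
      tauto

end IndependenceComplex

/-- Let `u, v₁, v₂` be three vertices with `{v₁,v₂} ∉ E(G)`,
`N(u) = {v₁,v₂}`, and `G[N(v₁) \ {u}]`, `G[N(v₂) \ {u}]` complete. If
`Ind(G \ (Ṅ(u) ∪ (N(v₁) ∩ N(v₂))))` is `(n-1)`-connected and
`Ind(G \ (Ṅ(w₁) ∪ Ṅ(w₂) ∪ {u}))` is `(n-2)`-connected for every edge `{w₁,w₂}` of the
complement of `G[N(v₁) ∪ N(v₂) \ {u}]`, then `Ind(G)` is `n`-connected. -/
theorem indComplex_nconnected_of_two_complete_nbhds {V : Type*} [Fintype V]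
    (G : SimpleGraph V) (u v₁ v₂ : V) (n : ℤ)
    (hne : v₁ ≠ v₂) (hnadj : ¬ G.Adj v₁ v₂)
    (hNu : G.neighborSet u = {v₁, v₂})
    (hc₁ : G.induce (G.neighborSet v₁ \ {u}) = ⊤)
    (hc₂ : G.induce (G.neighborSet v₂ \ {u}) = ⊤)
    (hA : IsNConnected (n - 1) (realization (indepFaces (G.induce
      (G.closedNbhd u ∪ (G.neighborSet v₁ ∩ G.neighborSet v₂))ᶜ))))
    (hB : ∀ w₁ w₂ : V,
      w₁ ∈ (G.neighborSet v₁ ∪ G.neighborSet v₂) \ {u} →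
      w₂ ∈ (G.neighborSet v₁ ∪ G.neighborSet v₂) \ {u} →
      w₁ ≠ w₂ → ¬ G.Adj w₁ w₂ →
      IsNConnected (n - 2) (realization (indepFaces (G.induce
        (G.closedNbhd w₁ ∪ G.closedNbhd w₂ ∪ {u})ᶜ)))) :
    IsNConnected n (realization (indepFaces G)) := by
  classical
  have : Nonempty V := ⟨u⟩
  have hu : ∀ x, G.Adj u x ↔ x = v₁ ∨ x = v₂ := fun x => by
    rw [← G.mem_neighborSet, hNu]; rfl
  have hclique : ∀ v, G.induce (G.neighborSet v \ {u}) = ⊤ → ∀ x y, G.Adj v x → x ≠ u →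
      G.Adj v y → y ≠ u → x ≠ y → G.Adj x y := by
    intro v hv x y hx hxu hy hyu hxy
    have : (G.induce (G.neighborSet v \ {u})).Adj ⟨x, hx, hxu⟩ ⟨y, hy, hyu⟩ := by
      rw [hv]
      exact fun h => hxy (congrArg Subtype.val h)
    exact this
  replace hc₁ := hclique v₁ hc₁
  replace hc₂ := hclique v₂ hc₂
  have key : ∀ x, x ∈ (G.closedNbhd u ∪ (G.neighborSet v₁ ∩ G.neighborSet v₂))ᶜ ↔
      x ≠ u ∧ x ≠ v₁ ∧ x ≠ v₂ ∧ ¬ (G.Adj v₁ x ∧ G.Adj v₂ x) := fun x => by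
    simp [SimpleGraph.closedNbhd, and_assoc, hu]
  have keyw : ∀ w₁ w₂ x, x ∈ (G.closedNbhd w₁ ∪ G.closedNbhd w₂ ∪ {u})ᶜ ↔
      x ≠ u ∧ x ≠ w₁ ∧ x ≠ w₂ ∧ ¬ G.Adj w₁ x ∧ ¬ G.Adj w₂ x := fun w₁ w₂ x => by
    simp only [SimpleGraph.closedNbhd, mem_compl_iff, mem_union, mem_insert_iff,
      SimpleGraph.mem_neighborSet, mem_singleton_iff]
    tauto
  have hA' : IsCubeConnected (n - 1) (openHull (indepFacesOn G
      (G.closedNbhd u ∪ (G.neighborSet v₁ ∩ G.neighborSet v₂))ᶜ)) :=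
    isCubeConnected_openHull_indepFacesOn hA
  set A := indepFacesOn G (G.closedNbhd u ∪ (G.neighborSet v₁ ∩ G.neighborSet v₂))ᶜ with hAdef
  have hAlow : IsLowerSet A := isLowerSet_indepFacesOn G _
  have hremove : ∀ E : Finset (V × V),
      (∀ e ∈ E, (G.Adj v₁ e.1 ∧ e.1 ≠ u) ∧ (G.Adj v₂ e.2 ∧ e.2 ≠ u) ∧ e.1 ≠ e.2 ∧
        ¬ G.Adj e.1 e.2) →
      IsCubeConnected (n - 1) (openHull {s | s ∈ A ∧ ∀ e ∈ E, ¬ (e.1 ∈ s ∧ e.2 ∈ s)}) := by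
    intro E
    induction E using Finset.induction_on with
    | empty => intro _; simpa using hA'
    | insert e E he ih =>
      intro hE
      obtain ⟨w₁, w₂⟩ := e
      obtain ⟨⟨h₁, h₁u⟩, ⟨h₂, h₂u⟩, hw, hwadj⟩ := hE _ (Finset.mem_insert_self _ _)
      replace hE := fun e h => hE e (Finset.mem_insert_of_mem h)
      dsimp only at h₁ h₁u h₂ h₂u hw hwadj
      have h₁₂ : ¬ G.Adj v₁ w₂ := fun h => hwadj (hc₁ _ _ h₁ h₁u h h₂u hw)
      have h₂₁ : ¬ G.Adj v₂ w₁ := fun h => hwadj (hc₂ _ _ h h₁u h₂ h₂u hw)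
      have hB' := isCubeConnected_openHull_indepFacesOn
        (hB w₁ w₂ ⟨.inl h₁, h₁u⟩ ⟨.inr h₂, h₂u⟩ hw hwadj)
      convert isCubeConnected_openHull_remove_edge (w₁ := w₁) (w₂ := w₂) ?_ hw ?_
        ⟨∅, empty_mem_indepFacesOn G _⟩ (ih hE) (by convert hB' using 1; ring) using 2
      · ext s
        simp only [mem_ofPred_eq, Finset.forall_mem_insert]
        tauto
      · exact fun s t hts hs => ⟨hAlow hts hs.1, fun e he h => hs.2 e he ⟨hts h.1, hts h.2⟩⟩
      · intro s
        constructor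
        · rintro ⟨hs, hsW⟩
          simp only [keyw] at hsW
          have hs₁ : ∀ x ∈ s, ¬ G.Adj v₁ x := fun x hx h =>
            (hsW x hx).2.2.2.1 (hc₁ _ _ h₁ h₁u h (hsW x hx).1 (hsW x hx).2.1.symm)
          have hs₂ : ∀ x ∈ s, ¬ G.Adj v₂ x := fun x hx h =>
            (hsW x hx).2.2.2.2 (hc₂ _ _ h₂ h₂u h (hsW x hx).1 (hsW x hx).2.2.1.symm)
          refine ⟨⟨⟨?_, ?_⟩, ?_⟩, fun h => (hsW _ h).2.1 rfl, fun h => (hsW _ h).2.2.1 rfl⟩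
          · rw [insert_mem_indepFaces_iff, insert_mem_indepFaces_iff, Finset.forall_mem_insert]
            exact ⟨⟨hs, fun x hx => (hsW x hx).2.2.2.2⟩, hwadj, fun x hx => (hsW x hx).2.2.2.1⟩
          · simp only [key, Finset.forall_mem_insert]
            refine ⟨⟨h₁u, h₁.ne', ?_, fun h => h₂₁ h.2⟩, ⟨h₂u, ?_, h₂.ne', fun h => h₁₂ h.1⟩,
              fun x hx => ⟨(hsW x hx).1, ?_, ?_, fun h => hs₁ x hx h.1⟩⟩
            · rintro rfl; exact hnadj h₁
            · rintro rfl; exact hnadj h₂.symm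
            · rintro rfl; exact (hsW _ hx).2.2.2.1 h₁.symm
            · rintro rfl; exact (hsW _ hx).2.2.2.2 h₂.symm
          · rintro ⟨a, b⟩ hab ⟨ha, hb⟩
            obtain ⟨⟨hva, -⟩, ⟨hvb, -⟩, -, -⟩ := hE _ hab
            simp only [Finset.mem_insert] at ha hb hva hvb
            rcases ha with rfl | rfl | ha
            · rcases hb with rfl | rfl | hb
              exacts [h₂₁ hvb, he hab, hs₂ _ hb hvb]
            · exact h₁₂ hva
            · exact hs₁ _ ha hva
        · rintro ⟨⟨⟨hs, hsW⟩, -⟩, hs₁, hs₂⟩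
          rw [insert_mem_indepFaces_iff, insert_mem_indepFaces_iff] at hs
          refine ⟨hs.1.1, fun x hx => (keyw _ _ _).2 ⟨?_, ?_, ?_, ?_, hs.1.2 x hx⟩⟩
          · exact ((key x).1 (hsW x (by simp [hx]))).1
          · rintro rfl; exact hs₁ hx
          · rintro rfl; exact hs₂ hx
          · exact hs.2 x (by simp [hx])
  refine IsCubeConnected.isNConnected_realization (isLowerSet_indepFaces G)
    (isCubeConnected_openHull_indepFaces_of_neighborSet_eq_pair hnadj hNu ?_)
  convert hremove (Finset.univ.filter fun e => (G.Adj v₁ e.1 ∧ e.1 ≠ u) ∧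
    (G.Adj v₂ e.2 ∧ e.2 ≠ u) ∧ e.1 ≠ e.2 ∧ ¬ G.Adj e.1 e.2) (by simp) using 2
  ext s
  refine and_congr_right fun hs => ?_
  simp only [Finset.mem_filter, Finset.mem_univ, true_and]
  have hsW := fun x hx => (key x).1 (hs.2 x hx)
  constructor
  · rintro (h | h) e he ⟨h₁, h₂⟩
    exacts [h _ h₁ he.1.1, h _ h₂ he.2.1.1]
  · intro h
    by_contra! h'
    obtain ⟨⟨a, ha, hva⟩, b, hb, hvb⟩ := h'
    refine h (a, b) ⟨⟨hva, (hsW a ha).1⟩, ⟨hvb, (hsW b hb).1⟩, fun hab => ?_, hs.1 a ha b hb⟩ ⟨ha, hb⟩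
    obtain rfl : a = b := hab
    exact (hsW a ha).2.2.2 ⟨hva, hvb⟩
end

section
/- If G is a claw-free graph with n vertices and maximal degree d, then the independence complex Ind(G) is ⌊(2n−1)/(3d+2) − 1⌋-connected. -/
open SimpleGraph

/-- A subset of `ℝ^N` has grid dimension less than `j` if, for some countable set `S` of reals,
each of its points has more than `N - j` coordinates in `S`. -/
def GridDimLT {N : ℕ} (j : ℕ) (Z : Set (Fin N → ℝ)) : Prop :=
  ∃ S : Set ℝ, S.Countable ∧ ∀ z ∈ Z, N < {i | z i ∈ S}.ncard + j

theorem GridDimLT.mono {N j : ℕ} {Z Z' : Set (Fin N → ℝ)} (h : GridDimLT j Z) (hZ : Z' ⊆ Z) :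
    GridDimLT j Z' :=
  let ⟨S, hS, h⟩ := h
  ⟨S, hS, fun z hz => h z (hZ hz)⟩

theorem gridDimLT_succ {N : ℕ} (Z : Set (Fin N → ℝ)) : GridDimLT (N + 1) Z :=
  ⟨∅, Set.countable_empty, fun _ _ => by omega⟩

theorem GridDimLT.eq_empty {N : ℕ} {Z : Set (Fin N → ℝ)} (h : GridDimLT 0 Z) : Z = ∅ := by
  obtain ⟨S, -, h⟩ := h
  refine Set.eq_empty_of_forall_notMem fun z hz => ?_
  have h₁ := h z hz
  have h₂ := Set.ncard_le_card {i | z i ∈ S}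
  simp only [Nat.card_eq_fintype_card, Fintype.card_fin] at h₂
  omega

/-- A countable set of reals is disjoint from some translate of `ε ℤ`. -/
theorem exists_translate_notMem {S : Set ℝ} (hS : S.Countable) (ε : ℝ) :
    ∃ a : ℝ, ∀ k : ℤ, a + k * ε ∉ S := by
  have hc : (⋃ k : ℤ, (fun s => s - k * ε) '' S).Countable :=
    Set.countable_iUnion fun k => hS.image _
  obtain ⟨a, ha⟩ : ∃ a, a ∉ ⋃ k : ℤ, (fun s => s - k * ε) '' S := by
    by_contra! h
    exact Set.not_countable_univ (hc.mono fun x _ => h x)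
  refine ⟨a, fun k hk => ha (Set.mem_iUnion.2 ⟨k, _, hk, ?_⟩)⟩
  ring

/-- Disjoint closed subsets of a compact set can be separated by a set of smaller dimension. -/
theorem GridDimLT.exists_separation {N j : ℕ} {Z C D : Set (Fin N → ℝ)} (hd : GridDimLT (j + 1) Z)
    (hZ : IsCompact Z) (hC : IsCompact C) (hD : IsClosed D) (hCD : Disjoint C D) :
    ∃ P Q : Set (Fin N → ℝ), IsClosed P ∧ IsClosed Q ∧ P ∪ Q = Z ∧ Disjoint C Q ∧ Disjoint D P ∧
      GridDimLT j (P ∩ Q) := by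
  obtain ⟨r, hr, hrd⟩ := Metric.exists_pos_forall_lt_edist hC hD hCD
  obtain ⟨S, hS, hZS⟩ := hd
  have hε : (0 : ℝ) < r := by exact_mod_cast hr
  obtain ⟨a, ha⟩ := exists_translate_notMem hS r
  let B : (Fin N → ℤ) → Set (Fin N → ℝ) := fun κ =>
    Set.Icc (fun i => a + κ i * r) (fun i => a + (κ i + 1) * r)
  let q : (Fin N → ℝ) → Fin N → ℤ := fun z i => ⌊(z i - a) / r⌋
  have hq : ∀ z, z ∈ B (q z) := by
    intro z
    constructor <;> intro i
    · have := Int.floor_le ((z i - a) / r)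
      rw [le_div_iff₀ hε] at this
      simp only [q]
      linarith
    · have := (Int.lt_floor_add_one ((z i - a) / r)).le
      rw [div_le_iff₀ hε] at this
      simp only [q]
      linarith
  have hfin : (q '' Z).Finite := by
    obtain ⟨l, hl⟩ := hZ.isBounded.bddBelow
    obtain ⟨u, hu⟩ := hZ.isBounded.bddAbove
    refine (Set.finite_Icc (q l) (q u)).subset ?_
    rintro _ ⟨z, hz, rfl⟩
    constructor <;> intro i <;> refine Int.floor_mono (div_le_div_of_nonneg_right ?_ hε.le)
    · exact sub_le_sub_right (hl hz i) a
    · exact sub_le_sub_right (hu hz i) a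
  let I : Set (Fin N → ℤ) := {κ | (B κ ∩ C).Nonempty}
  have hclosed : ∀ J : Set (Fin N → ℤ), IsClosed (Z ∩ ⋃ κ ∈ q '' Z ∩ J, B κ) := fun J =>
    hZ.isClosed.inter <| (hfin.inter_of_left J).isClosed_biUnion fun κ _ => isClosed_Icc
  refine ⟨_, _, hclosed I, hclosed Iᶜ, ?_, ?_, ?_, S ∪ Set.range fun k : ℤ => a + k * r, ?_, ?_⟩
  · ext z
    constructor
    · rintro (h | h) <;> exact h.1
    · intro hz
      by_cases h : q z ∈ I
      · exact Or.inl ⟨hz, Set.mem_biUnion ⟨Set.mem_image_of_mem _ hz, h⟩ (hq z)⟩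
      · exact Or.inr ⟨hz, Set.mem_biUnion ⟨Set.mem_image_of_mem _ hz, h⟩ (hq z)⟩
  · rw [Set.disjoint_left]
    rintro z hzC ⟨-, hz⟩
    simp only [Set.mem_iUnion] at hz
    obtain ⟨κ, ⟨-, hκ⟩, hz⟩ := hz
    exact hκ ⟨z, hz, hzC⟩
  · rw [Set.disjoint_left]
    rintro z hzD ⟨-, hz⟩
    simp only [Set.mem_iUnion] at hz
    obtain ⟨κ, ⟨-, c, hcB, hcC⟩, hz⟩ := hz
    have h := hrd c hcC z hzD
    rw [edist_nndist, ENNReal.coe_lt_coe, ← NNReal.coe_lt_coe, coe_nndist] at h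
    refine absurd h (not_lt.2 ((dist_pi_le_iff hε.le).2 fun i => ?_))
    have h₁ := hcB.1 i
    have h₂ := hcB.2 i
    have h₃ := hz.1 i
    have h₄ := hz.2 i
    simp only at h₁ h₂ h₃ h₄
    rw [Real.dist_eq, abs_le]
    constructor <;> linarith
  · exact hS.union (Set.countable_range _)
  · rintro z ⟨⟨hzZ, h₁⟩, -, h₂⟩
    simp only [Set.mem_iUnion] at h₁ h₂
    obtain ⟨κ, ⟨-, hκ⟩, h₁⟩ := h₁
    obtain ⟨κ', ⟨-, hκ'⟩, h₂⟩ := h₂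
    have key : ∃ i, ∃ k : ℤ, z i = a + k * r := by
      by_contra! hne
      refine hκ' ((funext fun i => ?_ : κ = κ') ▸ hκ)
      have hcell : ∀ μ : Fin N → ℤ, z ∈ B μ → ⌊(z i - a) / r⌋ = μ i := by
        intro μ hμ
        have h₃ := hμ.1 i
        have h₄ := lt_of_le_of_ne (hμ.2 i) (by exact_mod_cast hne i (μ i + 1))
        simp only at h₃ h₄
        rw [Int.floor_eq_iff, le_div_iff₀ hε, div_lt_iff₀ hε]
        constructor <;> linarith
      exact (hcell κ h₁).symm.trans (hcell κ' h₂)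
    obtain ⟨i, k, hik⟩ := key
    have hlt : {i | z i ∈ S}.ncard < {i | z i ∈ S ∪ Set.range fun k : ℤ => a + k * r}.ncard := by
      refine Set.ncard_lt_ncard ⟨fun i hi => Or.inl hi, fun h => ?_⟩ (Set.toFinite _)
      refine ha k (hik ▸ h (?_ : i ∈ _))
      exact Or.inr ⟨k, hik.symm⟩
    have := hZS z hzZ
    omega

theorem ContinuousOn.exists_continuous_extension {X ι : Type*} [TopologicalSpace X] [NormalSpace X]
    {W : Set X} (hW : IsClosed W) {f : X → ι → ℝ} (hf : ContinuousOn f W) :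
    ∃ g : X → ι → ℝ, Continuous g ∧ Set.EqOn g f W := by
  obtain ⟨g, hg⟩ := ContinuousMap.exists_restrict_eq hW ⟨W.domRestrict f, hf.domRestrict⟩
  exact ⟨g, g.continuous, fun x hx => congrArg (fun k : C(W, ι → ℝ) => k ⟨x, hx⟩) hg⟩

theorem ContinuousOn.exists_glue {X Y : Type*} [TopologicalSpace X] [TopologicalSpace Y]
    {P Q : Set X} (hP : IsClosed P) (hQ : IsClosed Q) {a b : X → Y} (ha : ContinuousOn a P)
    (hb : ContinuousOn b Q) (hab : Set.EqOn a b (P ∩ Q)) :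
    ∃ c : X → Y, ContinuousOn c (P ∪ Q) ∧ Set.EqOn c a P ∧ Set.EqOn c b Q := by
  classical
  have h₁ : Set.EqOn (P.piecewise a b) a P := Set.piecewise_eqOn _ _ _
  have h₂ : Set.EqOn (P.piecewise a b) b Q := by
    intro x hx
    by_cases h : x ∈ P
    · rw [h₁ h, hab ⟨h, hx⟩]
    · exact Set.piecewise_eq_of_notMem _ _ _ h
  exact ⟨_, (ha.congr h₁).union_of_isClosed (hb.congr h₂) hP hQ, h₁, h₂⟩

/-- Nonzero nonnegative weights whose support is an independent subset of `A`. -/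
structure IsIndepWeight {V : Type*} (G : SimpleGraph V) (A : Finset V) (x : V → ℝ) : Prop where
  nonneg : ∀ v, 0 ≤ x v
  exists_pos : ∃ v, 0 < x v
  eq_zero : ∀ v, v ∉ A → x v = 0
  adj : ∀ u v, G.Adj u v → 0 < x u → x v = 0

theorem IsIndepWeight.mono {V : Type*} {G : SimpleGraph V} {A B : Finset V} {x : V → ℝ}
    (h : IsIndepWeight G A x) (hAB : A ⊆ B) : IsIndepWeight G B x :=
  ⟨h.nonneg, h.exists_pos, fun v hv => h.eq_zero v fun hA => hv (hAB hA), h.adj⟩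

/-- Maps into the independence complex of `G` induced on `A` extend over compact subsets of
Euclidean spaces of grid dimension less than `j`. -/
def ExtendsBelow {V : Type*} (G : SimpleGraph V) (A : Finset V) (j : ℕ) : Prop :=
  ∀ (N : ℕ) (Z W : Set (Fin N → ℝ)), IsCompact Z → GridDimLT j Z → IsClosed W → W ⊆ Z →
    ∀ f : (Fin N → ℝ) → V → ℝ, ContinuousOn f W → (∀ x ∈ W, IsIndepWeight G A (f x)) →
      ∃ g : (Fin N → ℝ) → V → ℝ,
        ContinuousOn g Z ∧ (∀ x ∈ Z, IsIndepWeight G A (g x)) ∧ Set.EqOn g f W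

theorem extendsBelow_zero {V : Type*} (G : SimpleGraph V) (A : Finset V) : ExtendsBelow G A 0 := by
  rintro N Z W - hZ - hWZ f - -
  obtain rfl := hZ.eq_empty
  obtain rfl := Set.subset_empty_iff.1 hWZ
  exact ⟨f, by simp, by simp, by simp⟩

/-- If some vertex of `A` has no neighbours in `A`, the independence complex is a cone. -/
theorem extendsBelow_of_isolated {V : Type*} [Fintype V] {G : SimpleGraph V} {A : Finset V} {v : V}
    (hv : v ∈ A) (hiso : ∀ u ∈ A, ¬ G.Adj v u) (j : ℕ) : ExtendsBelow G A j := by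
  classical
  intro N Z W _ _ hW _ f hf hfA
  rcases W.eq_empty_or_nonempty with rfl | hne
  · refine ⟨fun _ => Pi.single v 1, continuousOn_const, fun x _ => ⟨?_, ⟨v, by simp⟩, ?_, ?_⟩,
      by simp⟩
    · intro u
      rcases eq_or_ne u v with rfl | h <;> simp [*]
    · intro u hu
      exact Pi.single_eq_of_ne (fun h : u = v => hu (h ▸ hv)) _
    · intro u w huw hu
      rcases eq_or_ne u v with rfl | h
      · exact Pi.single_eq_of_ne huw.ne' _
      · simp [h] at hu
  obtain ⟨g, hg, hgf⟩ := hf.exists_continuous_extension hW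
  let k : (Fin N → ℝ) → V → ℝ := fun x u =>
    if u ∈ A then max 0 (g x u - ∑ w, if G.Adj u w then |g x w| else 0) else 0
  have hk0 : ∀ x u, 0 ≤ k x u := by
    intro x u
    simp only [k]
    split_ifs
    · exact le_max_left _ _
    · exact le_rfl
  have hk : Continuous k := by
    refine continuous_pi fun u => ?_
    simp only [k]
    split_ifs
    · refine continuous_const.max (Continuous.sub (by fun_prop) (continuous_finsetSum _ fun w _ => ?_))
      split_ifs <;> fun_prop
    · exact continuous_const
  have hkadj : ∀ x u w, G.Adj u w → 0 < k x u → |g x w| < g x u := by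
    intro x u w huw h
    simp only [k] at h
    split_ifs at h with hu
    · rw [lt_max_iff] at h
      have h' := h.resolve_left (lt_irrefl _)
      have := Finset.single_le_sum (f := fun w => if G.Adj u w then |g x w| else 0)
        (fun i _ => by split_ifs <;> simp) (Finset.mem_univ w)
      simp only [huw, if_true] at this
      linarith
    · exact absurd h (lt_irrefl _)
  have hkf : Set.EqOn k f W := by
    intro x hx
    have hA := hfA x hx
    funext u
    simp only [k]
    split_ifs with hu
    · rw [hgf hx]
      rcases (hA.nonneg u).eq_or_lt with h | h
      · rw [← h, zero_sub, max_eq_left]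
        exact neg_nonpos.2 (Finset.sum_nonneg fun w _ => by split_ifs <;> simp)
      · rw [Finset.sum_eq_zero, sub_zero, max_eq_right h.le]
        intro w _
        split_ifs with hw
        · rw [hA.adj u w hw h, abs_zero]
        · rfl
    · exact (hA.eq_zero u hu).symm
  refine ⟨fun x => k x + Pi.single v (Metric.infDist x W), ?_, fun x hxZ => ⟨?_, ?_, ?_, ?_⟩, ?_⟩
  · have : Continuous fun x : Fin N → ℝ => (Pi.single v (Metric.infDist x W) : V → ℝ) :=
      (continuous_single v).comp (Metric.continuous_infDist_pt W)
    exact (hk.add this).continuousOn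
  · intro u
    refine add_nonneg (hk0 x u) ?_
    rcases eq_or_ne u v with rfl | h
    · simpa using Metric.infDist_nonneg
    · simp [h]
  · by_cases hx : x ∈ W
    · obtain ⟨u, hu⟩ := (hfA x hx).exists_pos
      refine ⟨u, ?_⟩
      simpa [hkf hx, Metric.infDist_zero_of_mem hx] using hu
    · refine ⟨v, add_pos_of_nonneg_of_pos (hk0 x v) ?_⟩
      simpa using (hW.notMem_iff_infDist_pos hne).1 hx
  · intro u hu
    have : u ≠ v := fun h => hu (h ▸ hv)
    simp [k, hu, this]
  · intro u w huw hu
    by_cases huA : u ∈ A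
    swap
    · have : u ≠ v := fun h => huA (h ▸ hv)
      simp [k, huA, this] at hu
    by_cases hwA : w ∈ A
    swap
    · have : w ≠ v := fun h => hwA (h ▸ hv)
      simp [k, hwA, this]
    have hu' : u ≠ v := by
      rintro rfl
      exact hiso w hwA huw
    have hw' : w ≠ v := by
      rintro rfl
      exact hiso u huA huw.symm
    simp only [Pi.add_apply, Pi.single_eq_of_ne hu', Pi.single_eq_of_ne hw', add_zero] at hu ⊢
    refine le_antisymm (not_lt.1 fun h => ?_) (hk0 x w)
    have h₁ := hkadj x u w huw hu
    have h₂ := hkadj x w u huw.symm h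
    have h₃ := le_abs_self (g x u)
    have h₄ := le_abs_self (g x w)
    linarith
  · intro x hx
    simp [hkf hx, Metric.infDist_zero_of_mem hx]

/-- The independence complex on `A` is the union of the one on `A \ {v}` and the star of `v`,
which meet in the link of `v`. -/
theorem ExtendsBelow.succ_of_erase_of_link {V : Type*} [Fintype V] [DecidableEq V]
    {G : SimpleGraph V} [DecidableRel G.Adj] {A : Finset V} {v : V} {j : ℕ} (hv : v ∈ A)
    (hdel : ExtendsBelow G (A.erase v) (j + 1))
    (hlink : ExtendsBelow G ((A.erase v).filter fun u => ¬ G.Adj v u) j) :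
    ExtendsBelow G A (j + 1) := by
  intro N Z W hZ hdim hW hWZ f hf hfA
  have hfv : ∀ u, ContinuousOn (fun x => f x u) W := fun u => (continuousOn_pi.1 hf) u
  let s : (V → ℝ) → ℝ := fun y => ∑ u ∈ Finset.univ.erase v, y u
  have hs0 : ∀ B : Finset V, ∀ y, IsIndepWeight G B y → 0 ≤ s y := fun _ y hy =>
    Finset.sum_nonneg fun u _ => hy.nonneg u
  have hspos : ∀ B : Finset V, ∀ y, IsIndepWeight G B y → 0 < s y → ∃ u, u ≠ v ∧ 0 < y u := by
    intro B y hy h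
    obtain ⟨u, hu, hne⟩ := Finset.exists_ne_zero_of_sum_ne_zero h.ne'
    exact ⟨u, (Finset.mem_erase.1 hu).1, (hy.nonneg u).lt_of_ne' hne⟩
  have hsle : ∀ B : Finset V, ∀ y, IsIndepWeight G B y → ∀ u, u ≠ v → y u ≤ s y := by
    intro B y hy u hu
    exact Finset.single_le_sum (fun w _ => hy.nonneg w) (Finset.mem_erase.2 ⟨hu, Finset.mem_univ u⟩)
  have hsc : Continuous s := by
    simp only [s]
    fun_prop
  have hsf : ContinuousOn (fun x => s (f x)) W := hsc.comp_continuousOn hf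
  -- Separate the points where `v` has large weight from those where it has small weight.
  have hCc : IsClosed {x ∈ W | 2 * s (f x) ≤ f x v} :=
    hW.isClosed_le (continuousOn_const.mul hsf) (hfv v)
  have hDc : IsClosed {x ∈ W | f x v ≤ s (f x)} := hW.isClosed_le (hfv v) hsf
  obtain ⟨P, Q, hP, hQ, hPQ, hCQ, hDP, hdimM⟩ := hdim.exists_separation hZ
    (hZ.of_isClosed_subset hCc fun x hx => hWZ hx.1) hDc (by
      rw [Set.disjoint_left]
      rintro x ⟨hx, h₁⟩ ⟨-, h₂⟩
      obtain ⟨u, hu⟩ := (hfA x hx).exists_pos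
      have h₃ := hs0 A _ (hfA x hx)
      rcases eq_or_ne u v with rfl | h
      · linarith
      · have := hsle A _ (hfA x hx) u h
        linarith)
  have hPv : ∀ x ∈ P, x ∈ W → s (f x) < f x v := fun x hx hxW =>
    not_le.1 fun h => Set.disjoint_left.1 hDP ⟨hxW, h⟩ hx
  have hQv : ∀ x ∈ Q, x ∈ W → f x v < 2 * s (f x) := fun x hx hxW =>
    not_le.1 fun h => Set.disjoint_left.1 hCQ ⟨hxW, h⟩ hx
  have hPZ : P ⊆ Z := hPQ ▸ Set.subset_union_left
  have hQZ : Q ⊆ Z := hPQ ▸ Set.subset_union_right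
  have hPv0 : ∀ x ∈ P, x ∈ W → 0 < f x v := fun x hx hxW =>
    (hs0 A _ (hfA x hxW)).trans_lt (hPv x hx hxW)
  -- Forget the weight of `v`.
  let p : (V → ℝ) → V → ℝ := fun y => Function.update y v 0
  have hpc : Continuous p := continuous_id.update v continuous_const
  have hpQ : ∀ x ∈ Q ∩ W, IsIndepWeight G (A.erase v) (p (f x)) := by
    rintro x ⟨hxQ, hxW⟩
    have hA := hfA x hxW
    have hspos' : 0 < s (f x) := by
      have := hQv x hxQ hxW
      have := hA.nonneg v
      linarith
    refine ⟨fun u => ?_, ?_, fun u hu => ?_, fun u w huw hu => ?_⟩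
    · rcases eq_or_ne u v with rfl | h
      · simp [p]
      · simpa [p, h] using hA.nonneg u
    · obtain ⟨u, hne, hu⟩ := hspos A _ hA hspos'
      exact ⟨u, by simpa [p, hne] using hu⟩
    · rcases eq_or_ne u v with rfl | h
      · simp [p]
      · have := hA.eq_zero u fun h' => hu (Finset.mem_erase.2 ⟨h, h'⟩)
        simpa [p, h] using this
    · rcases eq_or_ne w v with rfl | h
      · simp [p]
      · rcases eq_or_ne u v with rfl | h'
        · simp [p] at hu
        · have := hA.adj u w huw (by simpa [p, h'] using hu)
          simpa [p, h] using this
  have hpM : ∀ x ∈ (P ∩ Q) ∩ W,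
      IsIndepWeight G ((A.erase v).filter fun u => ¬ G.Adj v u) (p (f x)) := by
    rintro x ⟨⟨hxP, hxQ⟩, hxW⟩
    have h := hpQ x ⟨hxQ, hxW⟩
    refine ⟨h.nonneg, h.exists_pos, fun u hu => ?_, h.adj⟩
    by_cases hu' : u ∈ A.erase v
    · have huv : G.Adj v u := by
        by_contra h'
        exact hu (Finset.mem_filter.2 ⟨hu', h'⟩)
      have := (hfA x hxW).adj v u huv (hPv0 x hxP hxW)
      simpa [p, huv.ne'] using this
    · exact h.eq_zero u hu'
  obtain ⟨e, he, heM, hef⟩ := hlink N (P ∩ Q) ((P ∩ Q) ∩ W)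
    (hZ.of_isClosed_subset (hP.inter hQ) (Set.inter_subset_left.trans hPZ)) hdimM
    ((hP.inter hQ).inter hW) Set.inter_subset_left (fun x => p (f x))
    (hpc.comp_continuousOn (hf.mono Set.inter_subset_right)) hpM
  obtain ⟨e', he', he'M, he'W⟩ := ContinuousOn.exists_glue (hP.inter hQ) (hQ.inter hW) he
    (hpc.comp_continuousOn (hf.mono Set.inter_subset_right)) (fun x hx => hef ⟨hx.1, hx.2.2⟩)
  obtain ⟨g, hg, hgQ, hge⟩ := hdel N Q (P ∩ Q ∪ Q ∩ W) (hZ.of_isClosed_subset hQ hQZ)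
    (hdim.mono hQZ) ((hP.inter hQ).union (hQ.inter hW))
    (Set.union_subset Set.inter_subset_right Set.inter_subset_left) e' he' (by
      rintro x (hx | hx)
      · rw [he'M hx]
        exact (heM x hx).mono (Finset.filter_subset _ _)
      · rw [he'W hx]
        exact hpQ x hx)
  -- Restore the weight of `v` on `Q`.
  obtain ⟨τ, hτ, hτf⟩ := hf.exists_continuous_extension hW
  let m : (V → ℝ) → ℝ := fun y => ∑ u, if G.Adj v u then y u else 0
  let r : (V → ℝ) → ℝ := fun y => ∑ u, if G.Adj v u then 0 else y u
  have hmc : Continuous m := continuous_finsetSum _ fun u _ => by split_ifs <;> fun_prop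
  have hrc : Continuous r := continuous_finsetSum _ fun u _ => by split_ifs <;> fun_prop
  let σ : (Fin N → ℝ) → ℝ := fun x => min (max 0 (τ x v)) (2 * r (g x))
  have hσc : ContinuousOn σ Q := by
    have h₁ : Continuous fun x => max 0 (τ x v) := by fun_prop
    exact h₁.continuousOn.inf (continuousOn_const.mul (hrc.comp_continuousOn hg))
  let h : (Fin N → ℝ) → V → ℝ := fun x u =>
    if u = v then max 0 (σ x - m (g x)) else if G.Adj v u then max 0 (g x u - σ x) else g x u
  have hhc : ContinuousOn h Q := by
    refine continuousOn_pi.2 fun u => ?_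
    have hgu : ContinuousOn (fun x => g x u) Q := continuousOn_pi.1 hg u
    simp only [h]
    split_ifs
    · exact continuousOn_const.sup (hσc.sub (hmc.comp_continuousOn hg))
    · exact continuousOn_const.sup (hgu.sub hσc)
    · exact hgu
  have hr0 : ∀ x ∈ Q, 0 ≤ r (g x) := fun x hx =>
    Finset.sum_nonneg fun u _ => by split_ifs; exacts [le_rfl, (hgQ x hx).nonneg u]
  have hm : ∀ x ∈ Q, ∀ u, G.Adj v u → g x u ≤ m (g x) := by
    intro x hx u hu
    have := Finset.single_le_sum (f := fun u => if G.Adj v u then g x u else 0)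
      (fun i _ => by split_ifs; exacts [(hgQ x hx).nonneg i, le_rfl]) (Finset.mem_univ u)
    simpa only [hu, if_true] using this
  have hσ0 : ∀ x ∈ Q, 0 ≤ σ x := fun x hx =>
    le_min (le_max_left _ _) (mul_nonneg zero_le_two (hr0 x hx))
  have hhg : ∀ x ∈ Q, ∀ u, u ≠ v → h x u ≤ g x u := by
    intro x hx u hu
    simp only [h, hu, if_false]
    split_ifs
    · exact max_le ((hgQ x hx).nonneg u) (sub_le_self _ (hσ0 x hx))
    · exact le_rfl
  have hh0 : ∀ x ∈ Q, ∀ u, 0 ≤ h x u := by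
    intro x hx u
    simp only [h]
    split_ifs
    · exact le_max_left _ _
    · exact le_max_left _ _
    · exact (hgQ x hx).nonneg u
  have hvu : ∀ x ∈ Q, ∀ u, G.Adj v u → 0 < h x v → h x u = 0 := by
    intro x hx u hu hpos
    have h₁ := hm x hx u hu
    simp only [h, if_true, lt_max_iff, lt_irrefl, false_or] at hpos
    simp only [h, hu.ne', hu, if_true, if_false]
    exact max_eq_left (by linarith)
  have hhA : ∀ x ∈ Q, IsIndepWeight G A (h x) := by
    intro x hx
    have hgx := hgQ x hx
    refine ⟨hh0 x hx, ?_, fun u hu => ?_, fun u w huw hu => ?_⟩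
    · rcases (hr0 x hx).eq_or_lt with h₀ | h₀
      · obtain ⟨u, hu⟩ := hgx.exists_pos
        have hσ : σ x = 0 :=
          le_antisymm ((min_le_right _ _).trans (by rw [← h₀, mul_zero])) (hσ0 x hx)
        have huv : u ≠ v := by
          rintro rfl
          exact hu.ne' (hgx.eq_zero u (Finset.notMem_erase u A))
        refine ⟨u, ?_⟩
        simp only [h, huv, if_false, hσ, sub_zero]
        split_ifs
        · exact lt_max_of_lt_right hu
        · exact hu
      · obtain ⟨u, -, hu⟩ := Finset.exists_ne_zero_of_sum_ne_zero h₀.ne'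
        split_ifs at hu with hadj
        · exact absurd rfl hu
        · have huv : u ≠ v := by
            rintro rfl
            exact hu (hgx.eq_zero u (Finset.notMem_erase u A))
          refine ⟨u, ?_⟩
          simp only [h, huv, hadj, if_false]
          exact (hgx.nonneg u).lt_of_ne' hu
    · have huv : u ≠ v := fun h' => hu (h' ▸ hv)
      refine le_antisymm ((hhg x hx u huv).trans_eq ?_) (hh0 x hx u)
      exact hgx.eq_zero u fun h' => hu (Finset.mem_of_mem_erase h')
    · rcases eq_or_ne u v with rfl | huv
      · exact hvu x hx w huw hu
      · rcases eq_or_ne w v with rfl | hwv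
        · by_contra hne
          exact hu.ne' (hvu x hx u huw.symm ((hh0 x hx w).lt_of_ne' hne))
        · refine le_antisymm ((hhg x hx w hwv).trans_eq ?_) (hh0 x hx w)
          exact hgx.adj u w huw (hu.trans_le (hhg x hx u huv))
  have hhf : ∀ x ∈ Q, x ∈ W → h x = f x := by
    intro x hxQ hxW
    have hA := hfA x hxW
    have hgx : g x = p (f x) := by
      rw [hge (Or.inr ⟨hxQ, hxW⟩), he'W ⟨hxQ, hxW⟩, Function.comp_apply]
    have hgu : ∀ u, u ≠ v → g x u = f x u := fun u hu => by simp [hgx, p, hu]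
    have hgv : g x v = 0 := by simp [hgx, p]
    have hτx : max 0 (τ x v) = f x v := by rw [hτf hxW, max_eq_right (hA.nonneg v)]
    rcases (hA.nonneg v).eq_or_lt with h₀ | h₀
    · have hσ : σ x = 0 := le_antisymm ((min_le_left _ _).trans (by rw [hτx, ← h₀])) (hσ0 x hxQ)
      have hm0 : 0 ≤ m (g x) :=
        Finset.sum_nonneg fun u _ => by split_ifs; exacts [(hgQ x hxQ).nonneg u, le_rfl]
      funext u
      rcases eq_or_ne u v with rfl | hu
      · simp [h, hσ, hm0, ← h₀]
      · simp [h, hσ, hu, hgu u hu, hA.nonneg u]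
    · have hN : ∀ u, G.Adj v u → g x u = 0 := fun u hu => by
        rw [hgu u hu.ne', hA.adj v u hu h₀]
      have hm0 : m (g x) = 0 :=
        Finset.sum_eq_zero fun u _ => by split_ifs with hu; exacts [hN u hu, rfl]
      have hrs : r (g x) = s (f x) := by
        simp only [r, s]
        rw [← Finset.add_sum_erase _ _ (Finset.mem_univ v)]
        simp only [hgv, ite_self, zero_add]
        refine Finset.sum_congr rfl fun u hu => ?_
        split_ifs with hadj
        · exact (hA.adj v u hadj h₀).symm
        · exact hgu u (Finset.mem_erase.1 hu).1
      have hσ : σ x = f x v := by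
        simp only [σ, hτx, hrs]
        exact min_eq_left (hQv x hxQ hxW).le
      funext u
      rcases eq_or_ne u v with rfl | hu
      · simp [h, hσ, hm0, h₀.le]
      · by_cases hadj : G.Adj v u
        · simp [h, hσ, hu, hadj, hN u hadj, h₀.le, hA.adj v u hadj h₀]
        · simp [h, hu, hadj, hgu u hu]
  -- On `P` the map takes values in the star of `v`.
  have hstar : ExtendsBelow G (A.filter fun u => ¬ G.Adj v u) (j + 1) :=
    extendsBelow_of_isolated (v := v) (by simp [hv]) (fun u hu => (Finset.mem_filter.1 hu).2) _
  obtain ⟨h', hh', hh'M, hh'W⟩ := ContinuousOn.exists_glue (hP.inter hQ) (hP.inter hW)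
    (hhc.mono Set.inter_subset_right) (hf.mono Set.inter_subset_right)
    (fun x hx => hhf x hx.1.2 hx.2.2)
  obtain ⟨k, hk, hkP, hkh⟩ := hstar N P (P ∩ Q ∪ P ∩ W) (hZ.of_isClosed_subset hP hPZ)
    (hdim.mono hPZ) ((hP.inter hQ).union (hP.inter hW))
    (Set.union_subset Set.inter_subset_left Set.inter_subset_left) h' hh' (by
      rintro x (hx | hx)
      · rw [hh'M hx]
        have hA := hhA x hx.2
        refine ⟨hA.nonneg, hA.exists_pos, fun u hu => ?_, hA.adj⟩
        by_cases huA : u ∈ A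
        · have hadj : G.Adj v u := by simpa [huA] using hu
          refine le_antisymm ((hhg x hx.2 u hadj.ne').trans_eq ?_) (hA.nonneg u)
          rw [hge (Or.inl hx), he'M hx]
          exact (heM x hx).eq_zero u (by simp [hadj])
        · exact hA.eq_zero u huA
      · rw [hh'W hx]
        have hA := hfA x hx.2
        refine ⟨hA.nonneg, hA.exists_pos, fun u hu => ?_, hA.adj⟩
        by_cases huA : u ∈ A
        · exact hA.adj v u (by simpa [huA] using hu) (hPv0 x hx.1 hx.2)
        · exact hA.eq_zero u huA)
  obtain ⟨F, hF, hFk, hFh⟩ := ContinuousOn.exists_glue hP hQ hk hhc (fun x hx => by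
    rw [hkh (Or.inl hx), hh'M hx])
  rw [hPQ] at hF
  refine ⟨F, hF, fun x hx => ?_, fun x hx => ?_⟩
  · rw [← hPQ] at hx
    rcases hx with hx | hx
    · rw [hFk hx]
      exact (hkP x hx).mono (Finset.filter_subset _ _)
    · rw [hFh hx]
      exact hhA x hx
  · have hxZ := hWZ hx
    rw [← hPQ] at hxZ
    rcases hxZ with hxP | hxQ
    · rw [hFk hxP, hkh (Or.inr ⟨hxP, hx⟩), hh'W ⟨hxP, hx⟩]
    · rw [hFh hxQ, hhf x hxQ hx]

/-- Among vertices with a common neighbour in a claw-free graph, some vertex is adjacent to at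
least half of the others. -/
theorem SimpleGraph.ClawFree.exists_few_nonadj {V : Type*} [DecidableEq V] {G : SimpleGraph V}
    [DecidableRel G.Adj] (hG : G.ClawFree) {u : V} {D : Finset V} (hD : D.Nonempty)
    (hu : ∀ x ∈ D, G.Adj u x) :
    ∃ x ∈ D, 2 * ((D.erase x).filter fun y => ¬ G.Adj x y).card ≤ D.card := by
  by_cases hclique : ∀ x ∈ D, ∀ y ∈ D, x ≠ y → G.Adj x y
  · obtain ⟨x, hx⟩ := hD
    refine ⟨x, hx, ?_⟩
    rw [Finset.filter_false_of_mem, Finset.card_empty, mul_zero]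
    · exact Nat.zero_le _
    · intro y hy
      exact not_not.2 (hclique x hx y (Finset.mem_of_mem_erase hy) (Finset.ne_of_mem_erase hy).symm)
  push Not at hclique
  obtain ⟨x, hx, y, hy, hne, hxy⟩ := hclique
  have hdisj : Disjoint ((D.erase x).filter fun z => ¬ G.Adj x z)
      ((D.erase y).filter fun z => ¬ G.Adj y z) := by
    rw [Finset.disjoint_left]
    intro z hz₁ hz₂
    simp only [Finset.mem_filter, Finset.mem_erase] at hz₁ hz₂
    exact hG u x y z ⟨hne, hz₁.1.1.symm, hz₂.1.1.symm, hu x hx, hu y hy, hu z hz₁.1.2, hxy, hz₁.2,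
      hz₂.2⟩
  have hcard := Finset.card_le_card (Finset.union_subset
    ((Finset.filter_subset (fun z => ¬ G.Adj x z) _).trans (Finset.erase_subset x D))
    ((Finset.filter_subset (fun z => ¬ G.Adj y z) _).trans (Finset.erase_subset y D)))
  rw [Finset.card_union_of_disjoint hdisj] at hcard
  rcases le_total ((D.erase x).filter fun z => ¬ G.Adj x z).card
    ((D.erase y).filter fun z => ¬ G.Adj y z).card with h | h
  · exact ⟨x, hx, by omega⟩
  · exact ⟨y, hy, by omega⟩

theorem SimpleGraph.ClawFree.extendsBelow {V : Type*} [Fintype V] [DecidableEq V]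
    {G : SimpleGraph V} [DecidableRel G.Adj] (hG : G.ClawFree) {d : ℕ} (hd : ∀ v, G.degree v ≤ d)
    (j : ℕ) (A : Finset V) (hA : j * (3 * d + 2) ≤ 2 * A.card + 3 * d + 1) :
    ExtendsBelow G A j := by
  induction j generalizing A with
  | zero => exact extendsBelow_zero G A
  | succ j ih =>
    rw [Nat.succ_mul] at hA
    obtain ⟨u, hu⟩ : A.Nonempty := Finset.card_pos.1 (by omega)
    have key : ∀ k : ℕ, ∀ D : Finset V, D.card = k → D ⊆ A.filter (G.Adj u) →
        ExtendsBelow G (A \ D) (j + 1) → ExtendsBelow G A (j + 1) := by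
      intro k
      induction k with
      | zero =>
        intro D hD _ h
        rwa [Finset.card_eq_zero.1 hD, Finset.sdiff_empty] at h
      | succ k ihk =>
        intro D hD hDA h
        have hDu : ∀ x ∈ D, G.Adj u x := fun x hx => (Finset.mem_filter.1 (hDA hx)).2
        obtain ⟨x, hx, hfew⟩ := hG.exists_few_nonadj (Finset.card_pos.1 (by omega)) hDu
        refine ihk (D.erase x) (by rw [Finset.card_erase_of_mem hx, hD, Nat.add_sub_cancel])
          ((Finset.erase_subset x D).trans hDA) ?_
        have hxA : x ∈ A := (Finset.mem_filter.1 (hDA hx)).1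
        refine ExtendsBelow.succ_of_erase_of_link (v := x) (by simp [hxA]) ?_ (ih _ ?_)
        · convert h using 1
          ext y
          simp only [Finset.mem_erase, Finset.mem_sdiff, not_and, ne_eq]
          refine ⟨fun hy => ⟨hy.2.1, hy.2.2 hy.1⟩, fun hy => ⟨?_, hy.1, fun _ => hy.2⟩⟩
          rintro rfl
          exact hy.2 hx
        · have hsub : A ⊆ (((A \ D.erase x).erase x).filter fun y => ¬ G.Adj x y) ∪
              ((D.erase x).filter fun y => ¬ G.Adj x y) ∪ insert x (G.neighborFinset x) := by
            intro y hy
            simp only [Finset.mem_union, Finset.mem_filter, Finset.mem_erase, Finset.mem_sdiff,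
              Finset.mem_insert, SimpleGraph.mem_neighborFinset]
            tauto
          have h₁ := Finset.card_le_card hsub
          have h₂ := Finset.card_union_le ((((A \ D.erase x).erase x).filter fun y => ¬ G.Adj x y) ∪
              ((D.erase x).filter fun y => ¬ G.Adj x y)) (insert x (G.neighborFinset x))
          have h₃ := Finset.card_union_le (((A \ D.erase x).erase x).filter fun y => ¬ G.Adj x y)
              ((D.erase x).filter fun y => ¬ G.Adj x y)
          have h₄ := Finset.card_insert_le x (G.neighborFinset x)
          rw [SimpleGraph.card_neighborFinset_eq_degree] at h₄
          have h₅ := hd x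
          have h₆ : D.card ≤ d := by
            refine (Finset.card_le_card fun y hy => ?_).trans
              ((G.card_neighborFinset_eq_degree u).trans_le (hd u))
            exact (G.mem_neighborFinset u y).2 (hDu y hy)
          omega
    refine key _ _ rfl Finset.Subset.rfl (extendsBelow_of_isolated (v := u) (by simp [hu]) ?_ _)
    intro y hy hadj
    simp only [Finset.mem_sdiff, Finset.mem_filter, not_and] at hy
    exact hy.2 hy.1 hadj

/-- If `G` is claw-free with `n` vertices and maximal degree `d`, then
`Ind(G)` is `⌊(2n-1)/(3d+2) - 1⌋`-connected. -/
theorem indComplex_clawFree_connectivity {V : Type*} [Fintype V]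
    (G : SimpleGraph V) [DecidableRel G.Adj] (hG : G.ClawFree) (n d : ℕ)
    (hn : Fintype.card V = n) (hd : G.maxDegree = d) :
    IsNConnected ⌊(2 * (n : ℚ) - 1) / (3 * d + 2) - 1⌋
      (realization (indepFaces G)) := by
  classical
  have hdeg : ∀ v, G.degree v ≤ d := fun v => hd ▸ G.degree_le_maxDegree v
  have hpos : (0 : ℚ) < 3 * d + 2 := by positivity
  refine ⟨fun h => ?_, fun i hi f => ?_⟩
  · have h' : (0 : ℚ) ≤ (2 * (n : ℚ) - 1) / (3 * d + 2) := by
      rw [Int.le_floor] at h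
      push_cast at h
      linarith
    have hn0 : (0 : ℚ) ≤ 2 * n - 1 := by
      by_contra! hlt
      exact absurd h' (not_le.2 (div_neg_of_neg_of_pos hlt hpos))
    have hn1 : 0 < Fintype.card V := by
      rw [hn]
      by_contra! hle
      obtain rfl : n = 0 := by omega
      norm_num at hn0
    obtain ⟨v⟩ := Fintype.card_pos_iff.1 hn1
    refine ⟨⟨Pi.single v 1, fun u => ?_, ?_, {v}, ?_, ?_⟩⟩
    · rcases eq_or_ne u v with rfl | h <;> simp [*]
    · simp [finsum_eq_sum_of_fintype]
    · simp [indepFaces]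
    · ext u
      simp [Pi.single_apply]
  · have hj : (i + 2) * (3 * d + 2) ≤ 2 * (Finset.univ : Finset V).card + 3 * d + 1 := by
      rw [Finset.card_univ, hn]
      rw [Int.le_floor, le_sub_iff_add_le, le_div_iff₀ hpos] at hi
      have : (((i + 2) * (3 * d + 2) : ℕ) : ℚ) ≤ ((2 * n + 3 * d + 1 : ℕ) : ℚ) := by
        push_cast at hi ⊢
        linarith
      exact_mod_cast this
    let φ := EuclideanSpace.equiv (Fin (i + 1)) ℝ
    let B := Metric.closedBall (0 : EuclideanSpace ℝ (Fin (i + 1))) 1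
    let S := Metric.sphere (0 : EuclideanSpace ℝ (Fin (i + 1))) 1
    have hφS : ∀ x ∈ φ '' S, φ.symm x ∈ S := by
      rintro _ ⟨y, hy, rfl⟩
      simpa using hy
    let f₀ : (Fin (i + 1) → ℝ) → V → ℝ := fun x =>
      if hx : φ.symm x ∈ S then (f ⟨φ.symm x, hx⟩).1 else 0
    have hf₀ : ContinuousOn f₀ (φ '' S) := by
      rw [continuousOn_iff_continuous_domRestrict]
      have hc : Continuous fun x : φ '' S => (f ⟨φ.symm x.1, hφS x.1 x.2⟩).1 :=
        continuous_subtype_val.comp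
          (f.continuous.comp ((φ.symm.continuous.comp continuous_subtype_val).subtype_mk _))
      convert hc using 1
      funext x
      simp only [Set.domRestrict_apply, f₀, dif_pos (hφS x.1 x.2)]
    have hw : ∀ y : realization (indepFaces G), IsIndepWeight G Finset.univ y.1 := by
      rintro ⟨y, hy0, hy1, t, ht, hyt⟩
      refine ⟨hy0, ?_, fun v hv => absurd (Finset.mem_univ v) hv, fun u v huv hu => ?_⟩
      · rw [finsum_eq_sum_of_fintype] at hy1
        obtain ⟨v, -, hv⟩ := Finset.exists_ne_zero_of_sum_ne_zero (hy1.trans_ne one_ne_zero)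
        exact ⟨v, (hy0 v).lt_of_ne' hv⟩
      · by_contra hv
        have hut : u ∈ (t : Set V) := hyt ▸ hu.ne'
        have hvt : v ∈ (t : Set V) := hyt ▸ hv
        exact ht u hut v hvt huv
    obtain ⟨g, hg, hgw, hgf⟩ := hG.extendsBelow hdeg (i + 2) Finset.univ hj (i + 1) (φ '' B)
      (φ '' S) ((isCompact_closedBall _ _).image φ.continuous) (gridDimLT_succ _)
      ((isCompact_sphere _ _).image φ.continuous).isClosed
      (Set.image_mono Metric.sphere_subset_closedBall) f₀ hf₀ (by
        intro x hx
        simp only [f₀, dif_pos (hφS x hx)]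
        exact hw _)
    have hsum : ∀ x ∈ φ '' B, 0 < ∑ v, g x v := by
      intro x hx
      obtain ⟨v, hv⟩ := (hgw x hx).exists_pos
      exact hv.trans_le (Finset.single_le_sum (fun u _ => (hgw x hx).nonneg u) (Finset.mem_univ v))
    have hgB : ContinuousOn (fun x v => g x v / ∑ u, g x u) (φ '' B) := by
      have hgv : ∀ v, ContinuousOn (fun x => g x v) (φ '' B) := continuousOn_pi.1 hg
      exact continuousOn_pi.2 fun v =>
        (hgv v).div (continuousOn_finsetSum _ fun u _ => hgv u) fun x hx => (hsum x hx).ne'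
    have hφB : ∀ x : B, φ x.1 ∈ φ '' B := fun x => Set.mem_image_of_mem _ x.2
    refine ⟨⟨fun x => ⟨fun v => g (φ x.1) v / ∑ u, g (φ x.1) u, fun v => ?_, ?_,
      Finset.univ.filter fun v => 0 < g (φ x.1) v, ?_, ?_⟩, ?_⟩, fun x => ?_⟩
    · exact div_nonneg ((hgw _ (hφB x)).nonneg v) (hsum _ (hφB x)).le
    · rw [finsum_eq_sum_of_fintype, ← Finset.sum_div, div_self (hsum _ (hφB x)).ne']
    · intro a ha b hb hab
      exact (Finset.mem_filter.1 hb).2.ne' ((hgw _ (hφB x)).adj a b hab (Finset.mem_filter.1 ha).2)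
    · ext v
      simp [(hsum _ (hφB x)).ne', ((hgw _ (hφB x)).nonneg v).lt_iff_ne']
    · refine Continuous.subtype_mk ?_ _
      exact hgB.comp_continuous (φ.continuous.comp continuous_subtype_val) hφB
    · have hx : φ x.1 ∈ φ '' S := Set.mem_image_of_mem _ x.2
      have hgx : g (φ x.1) = (f x).1 := by
        rw [hgf hx]
        simp [f₀, S]
      have h1 : ∑ u, (f x).1 u = 1 := by
        rw [← finsum_eq_sum_of_fintype]
        exact (f x).2.2.1
      refine Subtype.ext (funext fun v => ?_)
      change g (φ x.1) v / ∑ u, g (φ x.1) u = (f x).1 v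
      rw [hgx, h1, div_one]
end
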